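/- arXiv:1112.4445 — 5 statements merged into one kernel-verified Lean document; each statement's English description precedes it below -/
import Mathlib

section
/- Let n ≥ 1 and let l₁, …, l_m ∈ ℤⁿ be primitive lattice vectors such that the polytope P = {x ∈ ℝⁿ : ⟨l_i, x⟩ ≤ 1 for all i = 1, …, m} is bounded. If the barycenter of P is the origin, i.e. ∫_P x dx = 0 (as a vector in ℝⁿ), then the Lebesgue volume of P satisfies vol(P) ≤ (n+1)ⁿ / n!. -/
open MeasureTheory

/-!
Pick `n` linearly independent functionals among the `l i`; they exist because a bounded `P`
contains no line. In the affine coordinates `y i = 1 - ⟨l (e i), x⟩` the polytope lies in the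
positive orthant and its barycenter is `(1, …, 1)`, so `n + 1 - ∑ y i` has integral exactly
`vol P` over `P`. That integral is at most the integral of `n + 1 - ∑ y i` over the part of the
orthant where it is nonnegative, the simplex `∑ y i ≤ n + 1`, divided by the Jacobian `|det|`
of the coordinate change. The simplex integral is `(n+1)^(n+1)/(n+1)! = (n+1)^n/n!`
(`lintegral_simplexWeight`), and `|det| ≥ 1` because it is a nonzero integer.
-/

/-- The weight `t - ∑ y i` on the simplex `{y ≥ 0, ∑ y i ≤ t}`, extended by zero. -/
noncomputable def simplexWeight (n : ℕ) (t : ℝ) (y : Fin n → ℝ) : ENNReal :=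
  {y : Fin n → ℝ | (∀ i, 0 ≤ y i) ∧ ∑ i, y i ≤ t}.indicator
    (fun y => ENNReal.ofReal (t - ∑ i, y i)) y

lemma measurable_simplexWeight (n : ℕ) (t : ℝ) : Measurable (simplexWeight n t) := by
  refine Measurable.indicator (by fun_prop) ?_
  refine IsClosed.measurableSet ?_
  refine IsClosed.inter (s₁ := {y : Fin n → ℝ | ∀ i, 0 ≤ y i})
    (s₂ := {y : Fin n → ℝ | ∑ i, y i ≤ t}) ?_ ?_
  · simp only [Set.ofPred_forall]
    exact isClosed_iInter fun i => isClosed_le (by fun_prop) (by fun_prop)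
  · exact isClosed_le (by fun_prop) (by fun_prop)

lemma simplexWeight_cons (n : ℕ) (t s : ℝ) (y : Fin n → ℝ) :
    simplexWeight (n + 1) t (Fin.cons s y) =
      (Set.Icc 0 t).indicator (fun s => simplexWeight n (t - s) y) s := by
  unfold simplexWeight
  by_cases hs : s ∈ Set.Icc 0 t
  · rw [Set.indicator_of_mem hs]
    simp only [Set.indicator, Set.mem_ofPred_eq, Fin.forall_fin_succ, Fin.sum_univ_succ,
      Fin.cons_zero, Fin.cons_succ, hs.1, true_and, le_sub_iff_add_le', sub_sub]
  · rw [Set.indicator_of_notMem hs, Set.indicator_of_notMem]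
    rintro ⟨h0, h1⟩
    simp only [Fin.forall_fin_succ, Fin.sum_univ_succ, Fin.cons_zero, Fin.cons_succ] at h0 h1
    have := Finset.sum_nonneg (fun i (_ : i ∈ Finset.univ) => h0.2 i)
    exact hs ⟨h0.1, by linarith⟩

/-- By slicing along the first coordinate, the integral in dimension `n + 1` is
`∫₀ᵗ (t - s)^(n+1)/(n+1)! ds`. -/
lemma lintegral_simplexWeight (n : ℕ) : ∀ t : ℝ, 0 ≤ t →
    ∫⁻ y, simplexWeight n t y = ENNReal.ofReal (t ^ (n + 1) / (n + 1).factorial) := by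
  induction n with
  | zero =>
    intro t ht
    rw [volume_pi, Measure.pi_of_empty, lintegral_dirac]
    simp [simplexWeight, ht]
  | succ n ih =>
    intro t ht
    have hmp := (volume_preserving_piFinSuccAbove (fun _ : Fin (n + 1) => ℝ) 0).symm
    rw [← hmp.lintegral_comp (measurable_simplexWeight _ _)]
    have hm : Measurable fun p : ℝ × (Fin n → ℝ) => simplexWeight (n + 1) t
        ((MeasurableEquiv.piFinSuccAbove (fun _ : Fin (n + 1) => ℝ) 0).symm p) :=
      (measurable_simplexWeight _ _).comp (MeasurableEquiv.measurable _)
    rw [Measure.volume_eq_prod, lintegral_prod _ hm.aemeasurable]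
    have hslice : ∀ s : ℝ, ∫⁻ y : Fin n → ℝ, simplexWeight (n + 1) t
        ((MeasurableEquiv.piFinSuccAbove (fun _ : Fin (n + 1) => ℝ) 0).symm (s, y)) =
        (Set.Icc 0 t).indicator
          (fun s => ENNReal.ofReal ((t - s) ^ (n + 1) / (n + 1).factorial)) s := by
      intro s
      have : ∀ y : Fin n → ℝ, (MeasurableEquiv.piFinSuccAbove (fun _ : Fin (n + 1) => ℝ) 0).symm
          (s, y) = (Fin.cons s y : Fin (n + 1) → ℝ) := fun y => by
        simp [MeasurableEquiv.piFinSuccAbove_symm_apply, Fin.consEquiv]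
      simp_rw [this, simplexWeight_cons]
      by_cases hs : s ∈ Set.Icc 0 t
      · simp only [Set.indicator_of_mem hs]
        exact ih _ (by linarith [hs.2])
      · simp [Set.indicator_of_notMem hs]
    simp_rw [hslice]
    rw [lintegral_indicator measurableSet_Icc, ← ofReal_integral_eq_lintegral_ofReal]
    · congr 1
      rw [integral_Icc_eq_integral_Ioc, ← intervalIntegral.integral_of_le ht,
        intervalIntegral.integral_div,
        intervalIntegral.integral_comp_sub_left (fun x => x ^ (n + 1)) t, integral_pow,
        Nat.factorial_succ (n + 1)]
      push_cast
      field_simp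
      simp
    · exact (by fun_prop : Continuous fun s : ℝ =>
        (t - s) ^ (n + 1) / ((n + 1).factorial : ℝ)).integrableOn_Icc
    · filter_upwards [ae_restrict_mem measurableSet_Icc] with s hs
      have : 0 ≤ t - s := by linarith [hs.2]
      positivity

/-- If `P` is bounded, it contains no line, so `n` of the functionals form a basis. -/
lemma exists_det_ne_zero (n m : ℕ) (l : Fin m → (Fin n → ℤ))
    (hbdd : Bornology.IsBounded {x : Fin n → ℝ | ∀ i, (∑ j, (l i j : ℝ) * x j) ≤ 1}) :
    ∃ e : Fin n → Fin m, (Matrix.of fun i j => l (e i) j).det ≠ 0 := by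
  set v : Fin m → (Fin n → ℝ) := fun i j => (l i j : ℝ) with hv
  have hspan : Submodule.span ℝ (Set.range v) = ⊤ := by
    by_contra hne
    obtain ⟨f, hf, hle⟩ := Submodule.exists_le_ker_of_lt_top _ (lt_top_iff_ne_top.2 hne)
    -- the vector representing `f` spans a line contained in `P`
    set x : Fin n → ℝ := fun j => f (Pi.single j 1) with hx
    have hfx : ∀ w : Fin n → ℝ, f w = ∑ j, w j * x j := by
      intro w
      rw [LinearMap.pi_apply_eq_sum_univ f w]
      refine Finset.sum_congr rfl fun j _ => ?_
      rw [smul_eq_mul, hx]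
      congr 2
      ext k
      simp [Pi.single_apply, eq_comm]
    have hx0 : x ≠ 0 := by
      intro h0
      exact hf (LinearMap.ext fun w => by simp [hfx, h0])
    obtain ⟨C, hC⟩ := hbdd.exists_norm_le
    have hmem : ∀ c : ℝ, c • x ∈ {x : Fin n → ℝ | ∀ i, (∑ j, (l i j : ℝ) * x j) ≤ 1} := by
      intro c i
      have h1 : f (v i) = 0 := hle (Submodule.subset_span ⟨i, rfl⟩)
      rw [hfx] at h1
      have : ∑ j, (l i j : ℝ) * (c • x) j = c * ∑ j, v i j * x j := by
        rw [Finset.mul_sum]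
        exact Finset.sum_congr rfl fun j _ => by simp [hv]; ring
      rw [this, h1]
      simp
    have hpos : 0 < ‖x‖ := norm_pos_iff.2 hx0
    have := hC _ (hmem ((|C| + 1) / ‖x‖))
    rw [norm_smul, Real.norm_eq_abs, abs_of_nonneg (by positivity),
      div_mul_cancel₀ _ hpos.ne'] at this
    linarith [le_abs_self C]
  obtain ⟨κ, a, ha, hsp, hli⟩ := exists_linearIndependent' ℝ v
  have : Finite κ := Finite.of_injective a ha
  have := Fintype.ofFinite κ
  have hcard : Fintype.card κ = n := by
    have := finrank_span_eq_card hli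
    rw [hsp, hspan, finrank_top, Module.finrank_fin_fun] at this
    exact this.symm
  let r : Fin n ≃ κ := (Fintype.equivFinOfCardEq hcard).symm
  refine ⟨a ∘ r, fun h0 => ?_⟩
  have hli' := hli.comp r r.injective
  have hu := Matrix.linearIndependent_rows_iff_isUnit
    (A := Matrix.of fun i j => (l ((a ∘ r) i) j : ℝ)) |>.1 hli'
  rw [Matrix.isUnit_iff_isUnit_det] at hu
  apply hu.ne_zero
  have := Int.cast_det (R := ℝ) (Matrix.of fun i j => l ((a ∘ r) i) j)
  rw [h0] at this
  simpa [Matrix.map] using this.symm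

/-- The substitution `y = 1 - L x` with an integer matrix `L` of nonzero determinant does not
increase integrals, since `|det L| ≥ 1`. -/
lemma lintegral_comp_one_sub_le (n : ℕ) (L : Matrix (Fin n) (Fin n) ℤ) (hL : L.det ≠ 0)
    (F : (Fin n → ℝ) → ENNReal) (hF : Measurable F) :
    ∫⁻ x : Fin n → ℝ, F (fun i => 1 - ∑ j, (L i j : ℝ) * x j) ≤ ∫⁻ y, F y := by
  set M : Matrix (Fin n) (Fin n) ℝ := L.map (Int.cast : ℤ → ℝ) with hM
  have hdet : M.det = (L.det : ℝ) := by
    rw [hM]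
    exact (Int.cast_det L).symm
  have hdet0 : M.det ≠ 0 := by
    rw [hdet]
    exact_mod_cast hL
  have hone : (1 : ℝ) ≤ |M.det| := by
    rw [hdet]
    exact_mod_cast Int.one_le_abs hL
  have hF' : Measurable fun y : Fin n → ℝ => F (1 - y) := hF.comp (by fun_prop)
  have hmeas : Measurable (Matrix.toLin' M) :=
    (LinearMap.continuous_of_finiteDimensional _).measurable
  calc ∫⁻ x : Fin n → ℝ, F (fun i => 1 - ∑ j, (L i j : ℝ) * x j)
      = ∫⁻ x : Fin n → ℝ, F (1 - Matrix.toLin' M x) := rfl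
    _ = ∫⁻ y, F (1 - y) ∂(Measure.map (Matrix.toLin' M) volume) :=
        (lintegral_map hF' hmeas).symm
    _ = ENNReal.ofReal |M.det⁻¹| * ∫⁻ y : Fin n → ℝ, F (1 - y) := by
        rw [Real.map_matrix_volume_pi_eq_smul_volume_pi hdet0, lintegral_smul_measure, smul_eq_mul]
    _ ≤ 1 * ∫⁻ y : Fin n → ℝ, F (1 - y) := by
        gcongr
        rw [ENNReal.ofReal_le_one, abs_inv]
        exact inv_le_one_of_one_le₀ hone
    _ = ∫⁻ y, F y := by
        rw [one_mul, lintegral_sub_left_eq_self]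


open MeasureTheory

/-- The Ehrhart conjecture for reflexive rational polytopes (the generalization of the
paper's main theorem to possibly singular toric ℚ-Fano varieties): if `P` is a bounded
polytope cut out by primitive integer linear functionals `l i` at level `1` and the
barycenter of `P` is the origin, then `vol P ≤ (n+1)^n / n!`. -/
theorem ehrhart_conjecture_rational
    (n m : ℕ) (hn : 1 ≤ n) (l : Fin m → (Fin n → ℤ))
    (hprim : ∀ i, Finset.univ.gcd (l i) = 1)
    (P : Set (Fin n → ℝ))
    (hP : P = {x : Fin n → ℝ | ∀ i, (∑ j, (l i j : ℝ) * x j) ≤ 1})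
    (hbdd : Bornology.IsBounded P)
    (hbar : (∫ x in P, x) = (0 : Fin n → ℝ)) :
    volume P ≤ ENNReal.ofReal (((n : ℝ) + 1) ^ n / (Nat.factorial n : ℝ)) := by
  have hclosed : IsClosed P := by
    rw [hP]
    simp only [Set.ofPred_forall]
    exact isClosed_iInter fun i => isClosed_le (by fun_prop) (by fun_prop)
  have hcomp : IsCompact P := Metric.isCompact_of_isClosed_isBounded hclosed hbdd
  have hfin : volume P ≠ ⊤ := hcomp.measure_lt_top.ne
  obtain ⟨e, he⟩ := exists_det_ne_zero n m l (hP ▸ hbdd)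
  have hbar' : ∀ j, ∫ x in P, x j = 0 := by
    intro j
    have hint : Integrable (fun x : Fin n → ℝ => x) (volume.restrict P) :=
      continuous_id.continuousOn.integrableOn_compact hcomp
    have := (ContinuousLinearMap.proj (R := ℝ) (φ := fun _ : Fin n => ℝ) j).integral_comp_comm hint
    rw [hbar] at this
    simpa using this
  have hintj : ∀ j, Integrable (fun x : Fin n → ℝ => x j) (volume.restrict P) := fun j =>
    (continuous_apply j).continuousOn.integrableOn_compact hcomp
  set h : (Fin n → ℝ) → ℝ := fun x => (n + 1) - ∑ i, (1 - ∑ j, (l (e i) j : ℝ) * x j) with hh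
  have hh' : ∀ x, h x = 1 + ∑ i, ∑ j, (l (e i) j : ℝ) * x j := by
    intro x
    simp only [hh, Finset.sum_sub_distrib, Finset.sum_const, Finset.card_univ, Fintype.card_fin,
      nsmul_eq_mul, mul_one]
    ring
  have hvol : ∫ x in P, h x = (volume P).toReal := by
    simp_rw [hh']
    have h1 : Integrable (fun _ : Fin n → ℝ => (1 : ℝ)) (volume.restrict P) :=
      continuous_const.continuousOn.integrableOn_compact hcomp
    have h2 : ∀ i, Integrable (fun x : Fin n → ℝ => ∑ j, (l (e i) j : ℝ) * x j)
        (volume.restrict P) := fun i =>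
      integrable_finsetSum _ fun j _ => (hintj j).const_mul _
    have h3 : ∀ i, ∫ x in P, ∑ j, (l (e i) j : ℝ) * x j = 0 := fun i => by
      rw [integral_finsetSum _ fun j _ => (hintj j).const_mul _]
      simp_rw [integral_const_mul, hbar', mul_zero, Finset.sum_const_zero]
    rw [integral_add h1 (integrable_finsetSum _ fun i _ => h2 i),
      integral_finsetSum _ fun i _ => h2 i]
    simp [h3, Measure.real]
  have hcont : Continuous h := by fun_prop
  calc volume P = ENNReal.ofReal (∫ x in P, h x) := by
        rw [hvol, ENNReal.ofReal_toReal hfin]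
    _ ≤ ∫⁻ x in P, ENNReal.ofReal (h x) := by
        have hi : Integrable h (volume.restrict P) := hcont.continuousOn.integrableOn_compact hcomp
        rw [integral_eq_lintegral_pos_part_sub_lintegral_neg_part hi]
        exact (ENNReal.ofReal_le_ofReal (sub_le_self _ ENNReal.toReal_nonneg)).trans
          ENNReal.ofReal_toReal_le
    _ ≤ ∫⁻ x in P, simplexWeight n (n + 1) (fun i => 1 - ∑ j, (l (e i) j : ℝ) * x j) := by
        refine setLIntegral_mono' hclosed.measurableSet fun x hx => ?_
        rw [hP] at hx
        have hpos : ∀ i, 0 ≤ 1 - ∑ j, (l (e i) j : ℝ) * x j := fun i => sub_nonneg.2 (hx (e i))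
        by_cases hs : ∑ i, (1 - ∑ j, (l (e i) j : ℝ) * x j) ≤ n + 1
        · have hmem : (fun i => 1 - ∑ j, (l (e i) j : ℝ) * x j) ∈
              {y : Fin n → ℝ | (∀ i, 0 ≤ y i) ∧ ∑ i, y i ≤ (n : ℝ) + 1} := ⟨hpos, hs⟩
          rw [simplexWeight, Set.indicator_of_mem hmem]
        · rw [ENNReal.ofReal_of_nonpos (by simp only [hh]; linarith)]
          exact zero_le
    _ ≤ ∫⁻ x : Fin n → ℝ, simplexWeight n (n + 1) (fun i => 1 - ∑ j, (l (e i) j : ℝ) * x j) :=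
        setLIntegral_le_lintegral _ _
    _ ≤ ∫⁻ y, simplexWeight n (n + 1) y :=
        lintegral_comp_one_sub_le n (Matrix.of fun i j => l (e i) j) he _
          (measurable_simplexWeight _ _)
    _ = ENNReal.ofReal (((n : ℝ) + 1) ^ n / (Nat.factorial n : ℝ)) := by
        rw [lintegral_simplexWeight n _ (by positivity), Nat.factorial_succ, pow_succ]
        congr 1
        push_cast
        field_simp
end

section
/- Let P ⊂ ℝⁿ be a compact convex set with nonempty interior containing 0, and let φ : ℝⁿ → ℝ be a smooth convex function such that det(Hess φ(x)) = e^{−φ(x)} for every x ∈ ℝⁿ and such that the gradient image {∇φ(x) : x ∈ ℝⁿ} equals the interior of P. Then the barycenter of P is the origin: ∫_P y dy = 0 (as a vector in ℝⁿ). -/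
/-!
The gradient map `∇φ` carries `e^{-φ} dx` to Lebesgue measure on `interior P`: it is injective, and
its Jacobian determinant is `det (Hess φ) = e^{-φ}`. Hence `e^{-φ}` is integrable, with total mass
`vol P`, and `∫_P y dy = ∫ e^{-φ} ∇φ dx = -∫ ∇(e^{-φ}) dx`. The gradient of the integrable function
`e^{-φ}` is itself integrable, so its integral vanishes by integration by parts against the
constant `1`.

Injectivity (`grad_injective`): if `∇φ` takes the same value `p` at `x` and `y`, then `x` and `y`
both minimize the convex function `φ - ⟨p, ·⟩`, hence so does every point of the segment between
them. So `∇φ = p` along that segment and the Hessian annihilates `y - x`; as its determinant is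
nonzero, `x = y`.

The frontier of the convex set `P` is null, so integrating over `P` or over its interior is the
same.
-/

open MeasureTheory

/-- The gradient of `φ : ℝⁿ → ℝ`, as the vector of partial derivatives. -/
noncomputable def grad {n : ℕ} (φ : (Fin n → ℝ) → ℝ) (x : Fin n → ℝ) : Fin n → ℝ :=
  fun i => fderiv ℝ φ x (Pi.single i 1)

/-- The Hessian matrix of second partial derivatives of `φ : ℝⁿ → ℝ`. -/
noncomputable def hess {n : ℕ} (φ : (Fin n → ℝ) → ℝ) (x : Fin n → ℝ) :
    Matrix (Fin n) (Fin n) ℝ :=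
  Matrix.of fun i j => fderiv ℝ (fun y => fderiv ℝ φ y (Pi.single j 1)) x (Pi.single i 1)

/-- A differentiable convex function lies above its tangent hyperplanes. -/
lemma convex_tangent_le {n : ℕ} {φ : (Fin n → ℝ) → ℝ} (hd : Differentiable ℝ φ)
    (hconv : ConvexOn ℝ Set.univ φ) (x z : Fin n → ℝ) :
    φ x + fderiv ℝ φ x (z - x) ≤ φ z := by
  have hline : ConvexOn ℝ Set.univ (fun t : ℝ => φ (AffineMap.lineMap x z t)) :=
    hconv.comp_affineMap (AffineMap.lineMap x z : ℝ →ᵃ[ℝ] (Fin n → ℝ))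
  have hder : HasDerivAt (fun t : ℝ => φ (AffineMap.lineMap x z t)) (fderiv ℝ φ x (z - x)) 0 := by
    have h1 : HasFDerivAt φ (fderiv ℝ φ x) (AffineMap.lineMap x z (0 : ℝ)) := by
      simpa using (hd x).hasFDerivAt
    exact h1.comp_hasDerivAt (0 : ℝ) AffineMap.hasDerivAt_lineMap
  have h := hline.le_slope_of_hasDerivAt (Set.mem_univ 0) (Set.mem_univ 1) one_pos hder
  simp [slope_def_field] at h
  simp
  linarith

/-- If the derivatives of a differentiable convex function agree at `x` and `y`, they agree on the
whole segment between them. -/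
lemma fderiv_eq_on_segment {n : ℕ} {φ : (Fin n → ℝ) → ℝ} (hd : Differentiable ℝ φ)
    (hconv : ConvexOn ℝ Set.univ φ) {x y : Fin n → ℝ} (hxy : fderiv ℝ φ x = fderiv ℝ φ y)
    {t : ℝ} (ht : t ∈ Set.Icc (0 : ℝ) 1) :
    fderiv ℝ φ (x + t • (y - x)) = fderiv ℝ φ x := by
  set ℓ := fderiv ℝ φ x with hℓ
  set z := x + t • (y - x) with hz
  have hmin : IsLocalMin (fun w => φ w - ℓ w) z := by
    refine Filter.Eventually.of_forall fun w => ?_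
    have h1 := convex_tangent_le hd hconv x w
    have h2 := convex_tangent_le hd hconv y w
    rw [← hxy] at h2
    have h3 := hconv.2 (Set.mem_univ x) (Set.mem_univ y) (sub_nonneg.2 ht.2) ht.1
      (sub_add_cancel 1 t)
    have hz' : z = (1 - t) • x + t • y := by rw [hz]; module
    rw [← hz'] at h3
    have hℓz : ℓ z = (1 - t) * ℓ x + t * ℓ y := by rw [hz']; simp
    simp only [smul_eq_mul, map_sub] at h1 h2 h3
    simp only [hℓz]
    nlinarith [mul_le_mul_of_nonneg_left h1 (sub_nonneg.2 ht.2),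
      mul_le_mul_of_nonneg_left h2 ht.1]
  have h0 := hmin.hasFDerivAt_eq_zero ((hd z).hasFDerivAt.sub ℓ.hasFDerivAt)
  exact sub_eq_zero.1 h0

/-- The derivative of the gradient map is the (transposed) Hessian. -/
lemma hasFDerivAt_grad {n : ℕ} {φ : (Fin n → ℝ) → ℝ} (hsmooth : ContDiff ℝ (⊤ : ℕ∞) φ)
    (x : Fin n → ℝ) :
    HasFDerivAt (grad φ) (Matrix.toLin' (hess φ x).transpose).toContinuousLinearMap x := by
  have hd1 : Differentiable ℝ (fderiv ℝ φ) :=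
    (hsmooth.fderiv_right (m := 1) (by norm_cast)).differentiable one_ne_zero
  rw [hasFDerivAt_pi']
  intro i
  have h : DifferentiableAt ℝ (fun y => fderiv ℝ φ y (Pi.single i 1)) x :=
    (hd1 x).clm_apply (differentiableAt_const _)
  have heq : (ContinuousLinearMap.proj i : (Fin n → ℝ) →L[ℝ] ℝ).comp
      (Matrix.toLin' (hess φ x).transpose).toContinuousLinearMap
      = fderiv ℝ (fun y => fderiv ℝ φ y (Pi.single i 1)) x := by
    refine ContinuousLinearMap.coe_injective (LinearMap.pi_ext' fun j => LinearMap.ext_ring ?_)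
    simp [hess]
  rw [heq]
  exact h.hasFDerivAt

lemma grad_injective {n : ℕ} {φ : (Fin n → ℝ) → ℝ} (hsmooth : ContDiff ℝ (⊤ : ℕ∞) φ)
    (hconv : ConvexOn ℝ Set.univ φ) (hdet : ∀ x, (hess φ x).det ≠ 0) :
    Function.Injective (grad φ) := by
  intro x y hxy
  have hd : Differentiable ℝ φ := hsmooth.differentiable (by simp)
  have hfd : fderiv ℝ φ x = fderiv ℝ φ y := by
    refine ContinuousLinearMap.coe_injective (LinearMap.pi_ext' fun i => LinearMap.ext_ring ?_)
    simpa [grad] using congrFun hxy i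
  set m := x + (1 / 2 : ℝ) • (y - x) with hm
  have hline : HasDerivAt (fun t : ℝ => x + t • (y - x)) (y - x) (1 / 2) := by
    simpa using ((hasDerivAt_id (1 / 2 : ℝ)).smul_const (y - x)).const_add x
  have hder := (hasFDerivAt_grad hsmooth m).comp_hasDerivAt (1 / 2 : ℝ) hline
  have hconst : HasDerivAt (grad φ ∘ fun t : ℝ => x + t • (y - x)) 0 (1 / 2) := by
    refine (hasDerivAt_const (1 / 2 : ℝ) (grad φ x)).congr_of_eventuallyEq ?_
    filter_upwards [Icc_mem_nhds (by norm_num : (0 : ℝ) < 1 / 2)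
      (by norm_num : (1 / 2 : ℝ) < 1)] with t ht
    funext i
    simp only [Function.comp, grad]
    rw [fderiv_eq_on_segment hd hconv hfd ht]
  have h0 := hder.unique hconst
  have h1 : (hess φ m).transpose.mulVec (y - x) = 0 := by simpa using h0
  have h2 := Matrix.eq_zero_of_mulVec_eq_zero (by simpa using hdet m) h1
  exact (sub_eq_zero.1 h2).symm

/-- Barycenter direction of Theorem 2: if a smooth convex `φ` solves the real
Monge–Ampère equation `det (Hess φ) = e^{-φ}` on all of `ℝⁿ` and its gradient image is
the interior of the compact convex body `P ∋ 0`, then the barycenter of `P` is the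
origin. -/
theorem barycenter_of_MongeAmpere_solution
    (n : ℕ) (P : Set (Fin n → ℝ))
    (hPcpt : IsCompact P) (hPconv : Convex ℝ P)
    (hPint : (interior P).Nonempty) (hP0 : (0 : Fin n → ℝ) ∈ P)
    (φ : (Fin n → ℝ) → ℝ)
    (hsmooth : ContDiff ℝ (⊤ : ℕ∞) φ) (hconv : ConvexOn ℝ Set.univ φ)
    (hMA : ∀ x, (hess φ x).det = Real.exp (-(φ x)))
    (hgrad : Set.range (grad φ) = interior P) :
    (∫ y in P, y) = (0 : Fin n → ℝ) := by
  have hd : Differentiable ℝ φ := hsmooth.differentiable (by simp)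
  have hinj : Set.InjOn (grad φ) Set.univ :=
    (grad_injective hsmooth hconv fun x => by rw [hMA]; positivity).injOn
  have himg : grad φ '' Set.univ = interior P := by rw [Set.image_univ, hgrad]
  have hderiv : ∀ x ∈ Set.univ, HasFDerivWithinAt (grad φ)
      (Matrix.toLin' (hess φ x).transpose).toContinuousLinearMap Set.univ x :=
    fun x _ => (hasFDerivAt_grad hsmooth x).hasFDerivWithinAt
  have hdet : ∀ x, |(Matrix.toLin' (hess φ x).transpose).toContinuousLinearMap.det|
      = Real.exp (-(φ x)) := fun x => by
    rw [LinearMap.det_toContinuousLinearMap, LinearMap.det_toLin', Matrix.det_transpose, hMA,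
      abs_of_pos (Real.exp_pos _)]
  -- These are pullbacks of `1` and of `y`, which are integrable because `P` is compact.
  have hint1 : Integrable (fun x => Real.exp (-(φ x))) := by
    have h := (integrableOn_image_iff_integrableOn_abs_det_fderiv_smul volume MeasurableSet.univ
      hderiv hinj (fun _ => (1 : ℝ))).1 (by
        rw [himg]
        exact (continuous_const.continuousOn.integrableOn_compact hPcpt).mono_set interior_subset)
    simpa only [hdet, integrableOn_univ, smul_eq_mul, mul_one] using h
  have hint2 : Integrable (fun x => Real.exp (-(φ x)) • grad φ x) := by
    have h := (integrableOn_image_iff_integrableOn_abs_det_fderiv_smul volume MeasurableSet.univ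
      hderiv hinj (fun y => y)).1 (by
        rw [himg]
        exact (continuous_id.continuousOn.integrableOn_compact hPcpt).mono_set interior_subset)
    simpa only [hdet, integrableOn_univ, smul_eq_mul, mul_one] using h
  have hcov : (∫ y in P, y) = ∫ x, Real.exp (-(φ x)) • grad φ x := by
    rw [← setIntegral_congr_set (interior_ae_eq_of_null_frontier (hPconv.addHaar_frontier volume)),
      ← himg, integral_image_eq_integral_abs_det_fderiv_smul volume MeasurableSet.univ hderiv hinj]
    simp only [hdet, setIntegral_univ]
  rw [hcov]
  funext i
  rw [eval_integral fun j => hint2.eval j]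
  have hfd : ∀ x, fderiv ℝ (fun x => Real.exp (-(φ x))) x (Pi.single i 1)
      = -(Real.exp (-(φ x)) • grad φ x) i := fun x => by
    have h : HasFDerivAt (fun x => Real.exp (-(φ x))) _ x := (hd x).hasFDerivAt.fun_neg.exp
    rw [h.fderiv]
    simp [grad]
  have hdiff : Differentiable ℝ (fun x => Real.exp (-(φ x))) := hd.neg.exp
  have hparts := integral_mul_fderiv_eq_neg_fderiv_mul_of_integrable (μ := volume)
    (f := fun _ : Fin n → ℝ => (1 : ℝ)) (g := fun x => Real.exp (-(φ x))) (v := Pi.single i 1)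
    (by simp) (by simp only [hfd, one_mul]; exact (hint2.eval i).neg) (by simpa using hint1)
    (fun _ _ => differentiableAt_const _) (fun x _ => hdiff x)
  simp only [hfd, one_mul, integral_neg] at hparts
  simpa using hparts
end

section
/- Let P ⊂ ℝⁿ be a compact convex set with nonempty interior containing 0 in its interior. Suppose φ₁, φ₂ : ℝⁿ → ℝ are smooth convex functions, each satisfying det(Hess φ_j(x)) = e^{−φ_j(x)} for every x ∈ ℝⁿ and having gradient image {∇φ_j(x) : x ∈ ℝⁿ} equal to the interior of P. Then there exists a ∈ ℝⁿ such that φ₂(x) = φ₁(x + a) for all x ∈ ℝⁿ. -/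
/-!
Both gradient maps are diffeomorphisms onto `interior P`, so `T = (∇φ₂)⁻¹ ∘ ∇φ₁` is a
diffeomorphism of `ℝⁿ`. It transports `e^{-φ₁} dx` to `e^{-φ₂} dx`, since
`Hess φ₂ (T x) * DT x = Hess φ₁ x` gives `det DT x = exp (φ₂ (T x) - φ₁ x)`.

The matrix `DT x` is similar to a positive definite one, so
`G x = tr (DT x) - n - log det (DT x)` is nonnegative and vanishes only where `DT x = 1`
(`mat_key`). A direct computation gives
`div (e^{-φ₁} (T x - x)) = e^{-φ₁} (G x - gap x)` with
`gap x = ∇φ₁ x ⬝ (T x - x) - φ₂ (T x) + φ₁ x`, the difference of the Legendre transforms of `φ₂`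
and `φ₁` at the common gradient. The field `e^{-φ₁} (T x - x)` is integrable because `φ₁`, `φ₂`
grow at least linearly (`0` is interior to `P`), hence its divergence integrates to zero in the
limit of large cutoffs and `∫ e^{-φ₁} G ≤ ∫ e^{-φ₁} gap` (`eq_zero_of_div_eq_sub` is the form used).

Exchanging `φ₁` and `φ₂` changes the sign of `∫ e^{-φ₁} gap`, so after a possible exchange this
integral is nonpositive. Then `G = 0` everywhere, `DT = 1`, `T` is a translation, and
`det DT = 1` says `φ₂ ∘ T = φ₁` (`translate_of_gap`).
-/

open MeasureTheory

namespace MAUnique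

/-! ### A trace–determinant inequality -/

/-- The matrix `M = H₂⁻¹ H₁` is similar to a positive definite matrix; summing
`log t ≤ t - 1` over its eigenvalues `t` gives the inequality, with equality only for `M = 1`. -/
lemma mat_key {n : ℕ} {H₁ H₂ M : Matrix (Fin n) (Fin n) ℝ} (h₁ : H₁.PosDef) (h₂ : H₂.PosDef)
    (h : H₂ * M = H₁) :
    0 ≤ M.trace - n - Real.log M.det ∧ (M.trace - n - Real.log M.det = 0 → M = 1) := by
  obtain ⟨B, hBu, hB⟩ : ∃ B : Matrix (Fin n) (Fin n) ℝ, IsUnit B ∧ H₂ = B.conjTranspose * B := by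
    open scoped MatrixOrder in
    obtain ⟨B, hu, hB⟩ := (CStarAlgebra.isStrictlyPositive_iff_eq_star_mul_self).1 h₂.isStrictlyPositive
    exact ⟨B, hu, hB⟩
  have hBd : IsUnit B.det := (Matrix.isUnit_iff_isUnit_det B).1 hBu
  have hBB : B * B⁻¹ = 1 := Matrix.mul_nonsing_inv B hBd
  have hBB' : B⁻¹ * B = 1 := Matrix.nonsing_inv_mul B hBd
  -- The positive definite conjugate of `M`.
  set S := B * M * B⁻¹ with hS
  have hSp : S.PosDef := by
    have : S = (B⁻¹).conjTranspose * H₁ * B⁻¹ := by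
      rw [hS, ← h, hB]
      have : (B⁻¹).conjTranspose * B.conjTranspose = 1 := by
        rw [← Matrix.conjTranspose_mul, hBB, Matrix.conjTranspose_one]
      rw [← Matrix.mul_assoc, ← Matrix.mul_assoc, this, Matrix.one_mul]
    rw [this]
    refine h₁.conjTranspose_mul_mul_same ?_
    exact Matrix.mulVec_injective_of_isUnit ((Matrix.isUnit_nonsing_inv_iff).2 hBu)
  have htr : S.trace = M.trace := by
    rw [hS, Matrix.trace_mul_comm, ← Matrix.mul_assoc, hBB', Matrix.one_mul]
  have hdet : S.det = M.det := by
    rw [hS, Matrix.det_mul, Matrix.det_mul, mul_right_comm, ← Matrix.det_mul, hBB]; simp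
  have hH := hSp.isHermitian
  have e1 : M.trace - n - Real.log M.det
      = ∑ i, (hH.eigenvalues i - 1 - Real.log (hH.eigenvalues i)) := by
    rw [← htr, ← hdet, hH.trace_eq_sum_eigenvalues, hH.det_eq_prod_eigenvalues]
    simp only [RCLike.ofReal_real_eq_id, id]
    rw [Real.log_prod (fun i _ => (hSp.eigenvalues_pos i).ne')]
    simp [Finset.sum_sub_distrib]
  have hnn : ∀ i, 0 ≤ hH.eigenvalues i - 1 - Real.log (hH.eigenvalues i) := fun i => by
    linarith [Real.log_le_sub_one_of_pos (hSp.eigenvalues_pos i)]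
  rw [e1]
  refine ⟨Finset.sum_nonneg fun i _ => hnn i, fun h0 => ?_⟩
  have hz := (Finset.sum_eq_zero_iff_of_nonneg fun i _ => hnn i).1 h0
  have hev : hH.eigenvalues = fun _ => 1 := by
    funext i
    by_contra hne
    have := Real.log_lt_sub_one_of_pos (hSp.eigenvalues_pos i) hne
    linarith [hz i (Finset.mem_univ i)]
  have hS1 : S = 1 := by
    rw [hH.spectral_theorem, hev]
    have : (RCLike.ofReal ∘ fun _ : Fin n => (1:ℝ)) = (1 : Fin n → ℝ) := by ext; simp
    rw [this, Matrix.diagonal_one', map_one]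
  calc M = B⁻¹ * (B * M * B⁻¹) * B := by
        rw [Matrix.mul_assoc, Matrix.mul_assoc (B * M), hBB', Matrix.mul_one, ← Matrix.mul_assoc, hBB',
          Matrix.one_mul]
    _ = 1 := by rw [← hS, hS1, Matrix.mul_one, hBB']

/-! ### Gradients and Hessians of smooth convex functions -/

variable {n : ℕ} {φ : (Fin n → ℝ) → ℝ}

lemma contDiff_grad (hs : ContDiff ℝ (⊤ : ℕ∞) φ) : ContDiff ℝ (⊤ : ℕ∞) (grad φ) := by
  refine contDiff_pi.2 fun i => ?_
  exact (hs.fderiv_right (m := (⊤ : ℕ∞)) (by simp)).clm_apply contDiff_const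

lemma fderiv_eq_grad (x v : Fin n → ℝ) : fderiv ℝ φ x v = grad φ x ⬝ᵥ v := by
  conv_lhs => rw [← Finset.univ_sum_single v]
  rw [map_sum]
  refine Finset.sum_congr rfl fun i _ => ?_
  have : Pi.single i (v i) = v i • (Pi.single i 1 : Fin n → ℝ) := by
    rw [← Pi.single_smul]; simp
  rw [this, map_smul, smul_eq_mul, mul_comm]; rfl

lemma hess_apply (hs : ContDiff ℝ (⊤ : ℕ∞) φ) (x : Fin n → ℝ) (i j : Fin n) :
    hess φ x i j = fderiv ℝ (fderiv ℝ φ) x (Pi.single i 1) (Pi.single j 1) := by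
  have hd : DifferentiableAt ℝ (fderiv ℝ φ) x :=
    ((hs.fderiv_right (m := (⊤ : ℕ∞)) (by simp)).differentiable (by simp)) x
  simp only [hess, Matrix.of_apply]
  rw [fderiv_clm_apply hd (differentiableAt_const _)]
  simp

lemma hess_symm (hs : ContDiff ℝ (⊤ : ℕ∞) φ) (x : Fin n → ℝ) : (hess φ x).transpose = hess φ x := by
  ext i j
  rw [Matrix.transpose_apply, hess_apply hs, hess_apply hs]
  exact (hs.contDiffAt.isSymmSndFDerivAt (by simp; exact WithTop.coe_le_coe.2 (le_top : (2 : ℕ∞) ≤ ⊤))) _ _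

lemma fderiv_grad (hs : ContDiff ℝ (⊤ : ℕ∞) φ) (x v : Fin n → ℝ) :
    fderiv ℝ (grad φ) x v = (hess φ x).mulVec v := by
  ext j
  have hg : DifferentiableAt ℝ (grad φ) x := (contDiff_grad hs).differentiable (by simp) x
  have h1 : fderiv ℝ (grad φ) x v j = fderiv ℝ (fun y => grad φ y j) x v := by
    rw [fderiv_apply hg]; rfl
  rw [h1, fderiv_eq_grad, ← hess_symm hs]
  rfl

lemma hasDerivAt_line (hs : ContDiff ℝ (⊤ : ℕ∞) φ) (x v : Fin n → ℝ) (t : ℝ) :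
    HasDerivAt (fun s : ℝ => φ (x + s • v)) (grad φ (x + t • v) ⬝ᵥ v) t := by
  have h1 : HasDerivAt (fun s : ℝ => x + s • v) v t := by
    simpa using ((hasDerivAt_id t).smul_const v).const_add x
  have h2 := (hs.differentiable (by simp) (x + t • v)).hasFDerivAt
  rw [← fderiv_eq_grad]
  exact h2.comp_hasDerivAt t h1

lemma hasDerivAt_grad_line (hs : ContDiff ℝ (⊤ : ℕ∞) φ) (x v : Fin n → ℝ) (t : ℝ) :
    HasDerivAt (fun s : ℝ => grad φ (x + s • v) ⬝ᵥ v) ((hess φ (x + t • v)).mulVec v ⬝ᵥ v) t := by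
  have h1 : HasDerivAt (fun s : ℝ => x + s • v) v t := by
    simpa using ((hasDerivAt_id t).smul_const v).const_add x
  have h2 := ((contDiff_grad hs).differentiable (by simp) (x + t • v)).hasFDerivAt
  have h3 := h2.comp_hasDerivAt t h1
  rw [fderiv_grad hs] at h3
  exact HasDerivAt.fun_sum fun i _ => ((hasDerivAt_pi.1 h3) i).mul_const (v i)

lemma convex_line (hc : ConvexOn ℝ Set.univ φ) (x v : Fin n → ℝ) :
    ConvexOn ℝ Set.univ (fun s : ℝ => φ (x + s • v)) := by
  have := hc.comp_affineMap (AffineMap.lineMap x (x + v) : ℝ →ᵃ[ℝ] (Fin n → ℝ))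
  simpa [Function.comp_def, AffineMap.lineMap_apply, add_comm] using this

/-- Convexity makes the Hessian positive semidefinite, as the derivative of a monotone function
along each line; a nonzero determinant upgrades this to positive definite. -/
lemma posDef_hess (hs : ContDiff ℝ (⊤ : ℕ∞) φ) (hc : ConvexOn ℝ Set.univ φ) (x : Fin n → ℝ)
    (hd : (hess φ x).det ≠ 0) : (hess φ x).PosDef := by
  have hps : (hess φ x).PosSemidef := by
    refine Matrix.PosSemidef.of_dotProduct_mulVec_nonneg ?_ fun v => ?_
    · rw [Matrix.IsHermitian, Matrix.conjTranspose_eq_transpose_of_trivial, hess_symm hs]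
    · have hm : Monotone (fun s : ℝ => grad φ (x + s • v) ⬝ᵥ v) := by
        have := (convex_line hc x v).monotoneOn_deriv
          (fun t _ => (hasDerivAt_line hs x v t).differentiableAt)
        rw [monotoneOn_univ] at this
        convert this using 1
        funext t
        exact (hasDerivAt_line hs x v t).deriv.symm
      have h := hm.deriv_nonneg (x := 0)
      rw [(hasDerivAt_grad_line hs x v 0).deriv] at h
      simpa [dotProduct_comm] using h
  exact hps.posDef_iff_det_ne_zero.2 hd

/-- The component of the gradient along the segment from `x` to `y` is strictly increasing. -/
lemma grad_inj (hs : ContDiff ℝ (⊤ : ℕ∞) φ) (hp : ∀ x, (hess φ x).PosDef) :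
    Function.Injective (grad φ) := by
  intro x y hxy
  by_contra hne
  have hv : y - x ≠ 0 := sub_ne_zero.2 (Ne.symm hne)
  have hm : StrictMono (fun s : ℝ => grad φ (x + s • (y - x)) ⬝ᵥ (y - x)) := by
    refine strictMono_of_deriv_pos fun t => ?_
    rw [(hasDerivAt_grad_line hs x (y - x) t).deriv, dotProduct_comm]
    simpa using (hp (x + t • (y - x))).dotProduct_mulVec_pos hv
  have := hm (zero_lt_one (α := ℝ))
  simp [hxy] at this

/-- A convex function lies above its tangent hyperplanes. -/
lemma grad_ineq (hs : ContDiff ℝ (⊤ : ℕ∞) φ) (hc : ConvexOn ℝ Set.univ φ) (x y : Fin n → ℝ) :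
    φ x + grad φ x ⬝ᵥ (y - x) ≤ φ y := by
  have h := (convex_line hc x (y - x)).le_slope_of_hasDerivAt (Set.mem_univ 0) (Set.mem_univ 1)
    zero_lt_one (hasDerivAt_line hs x (y - x) 0)
  simp [slope_def_field] at h
  rw [dotProduct_sub]
  linarith

/-! ### The transport map -/

/-- The transport map `T = (∇φ₂)⁻¹ ∘ ∇φ₁`. It is `C¹` by the inverse function theorem, as `∇φ₂` is
injective with invertible derivative. -/
lemma exists_transport {φ₁ φ₂ : (Fin n → ℝ) → ℝ}
    (hs₁ : ContDiff ℝ (⊤ : ℕ∞) φ₁) (hs₂ : ContDiff ℝ (⊤ : ℕ∞) φ₂)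
    (hp₂ : ∀ x, (hess φ₂ x).PosDef) (hr : Set.range (grad φ₁) ⊆ Set.range (grad φ₂)) :
    ∃ T : (Fin n → ℝ) → (Fin n → ℝ), ContDiff ℝ 1 T ∧ ∀ x, grad φ₂ (T x) = grad φ₁ x := by
  have hg := contDiff_grad hs₂
  have hinj := grad_inj hs₂ hp₂
  have hker : ∀ x, LinearMap.ker (fderiv ℝ (grad φ₂) x : (Fin n → ℝ) →ₗ[ℝ] (Fin n → ℝ)) = ⊥ := by
    intro x
    refine LinearMap.ker_eq_bot'.2 fun v hv => ?_
    by_contra hne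
    have := (hp₂ x).dotProduct_mulVec_pos hne
    rw [← fderiv_grad hs₂] at this
    erw [hv] at this
    simp at this
  let e : ∀ x, (Fin n → ℝ) ≃L[ℝ] (Fin n → ℝ) := fun x =>
    (LinearEquiv.ofInjectiveEndo _ (LinearMap.ker_eq_bot.1 (hker x))).toContinuousLinearEquiv
  have he : ∀ x, ((e x : (Fin n → ℝ) →L[ℝ] (Fin n → ℝ))) = fderiv ℝ (grad φ₂) x := by
    intro x; ext v; rfl
  have hstrict : ∀ x, HasStrictFDerivAt (grad φ₂) (e x : (Fin n → ℝ) →L[ℝ] (Fin n → ℝ)) x := by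
    intro x
    rw [he]
    exact hg.contDiffAt.hasStrictFDerivAt (by simp)
  have hopen : IsOpenMap (grad φ₂) := isOpenMap_of_hasStrictFDerivAt_equiv hstrict
  have hemb : Topology.IsOpenEmbedding (grad φ₂) :=
    Topology.IsOpenEmbedding.of_continuous_injective_isOpenMap hg.continuous hinj hopen
  let F := hemb.toOpenPartialHomeomorph (grad φ₂)
  refine ⟨fun x => F.symm (grad φ₁ x), ?_, fun x => ?_⟩
  · refine contDiff_iff_contDiffAt.2 fun x => ?_
    have hmem : grad φ₁ x ∈ F.target := by
      have : F.target = Set.range (grad φ₂) := by simp [F]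
      rw [this]; exact hr ⟨x, rfl⟩
    have h1 : ContDiffAt ℝ 1 F.symm (grad φ₁ x) :=
      F.contDiffAt_symm hmem (hstrict _).hasFDerivAt
        (hg.contDiffAt.of_le (by exact_mod_cast le_top))
    exact h1.comp x ((contDiff_grad hs₁).contDiffAt.of_le (by exact_mod_cast le_top))
  · exact hemb.toOpenPartialHomeomorph_right_inv _ (hr ⟨x, rfl⟩)

/-! ### Growth and integrability -/

lemma abs_dot_le (a b : Fin n → ℝ) : |a ⬝ᵥ b| ≤ n * (‖a‖ * ‖b‖) := by
  calc |∑ i, a i * b i| ≤ ∑ i, |a i * b i| := Finset.abs_sum_le_sum_abs _ _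
    _ ≤ ∑ _i : Fin n, ‖a‖ * ‖b‖ := by
        refine Finset.sum_le_sum fun i _ => ?_
        rw [abs_mul]
        exact mul_le_mul (norm_le_pi_norm a i) (norm_le_pi_norm b i) (abs_nonneg _) (norm_nonneg _)
    _ = n * (‖a‖ * ‖b‖) := by simp

/-- The tangent hyperplanes with slopes `±ε eᵢ` bound `φ` from below by a multiple of the
sup norm, up to a constant. -/
lemma coercive (hs : ContDiff ℝ (⊤ : ℕ∞) φ) (hc : ConvexOn ℝ Set.univ φ)
    (h0 : Set.range (grad φ) ∈ nhds 0) : ∃ ε > 0, ∃ C, ∀ x, ε * ‖x‖ - C ≤ φ x := by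
  obtain ⟨ε, hε, hball⟩ := Metric.nhds_basis_closedBall.mem_iff.1 h0
  have hp : ∀ v : Fin n → ℝ, ‖v‖ ≤ 1 → ∃ C, ∀ x, ε * (v ⬝ᵥ x) - C ≤ φ x := by
    intro v hv
    obtain ⟨y, hy⟩ := hball (show ε • v ∈ Metric.closedBall 0 ε by
      rw [mem_closedBall_zero_iff, norm_smul, Real.norm_of_nonneg hε.le]
      exact mul_le_of_le_one_right hε.le hv)
    refine ⟨ε * (v ⬝ᵥ y) - φ y, fun x => ?_⟩
    have := grad_ineq hs hc y x
    rw [hy, dotProduct_sub, smul_dotProduct, smul_dotProduct, smul_eq_mul, smul_eq_mul] at this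
    linarith
  have hp' : ∀ i : Fin n, ∃ C, ∀ x, ε * |x i| - C ≤ φ x := by
    intro i
    obtain ⟨C, hC⟩ := hp (Pi.single i 1) (by simp [Pi.norm_single])
    obtain ⟨D, hD⟩ := hp (-Pi.single i 1) (by simp [Pi.norm_single])
    refine ⟨max C D, fun x => ?_⟩
    have h1 := hC x
    have h2 := hD x
    simp only [neg_dotProduct, single_dotProduct, one_mul] at h1 h2
    rcases abs_cases (x i) with ⟨h, _⟩ | ⟨h, _⟩ <;> rw [h]
    · linarith [le_max_left C D]
    · linarith [le_max_right C D]
  choose C hC using hp'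
  obtain ⟨C0, hC0⟩ := hp 0 (by simp)
  refine ⟨ε, hε, |C0| + ∑ i, |C i|, fun x => ?_⟩
  have hle : ‖x‖ ≤ (φ x + (|C0| + ∑ i, |C i|)) / ε := by
    have hsum : 0 ≤ ∑ i, |C i| := Finset.sum_nonneg fun _ _ => abs_nonneg _
    refine (pi_norm_le_iff_of_nonneg ?_).2 fun i => ?_
    · refine div_nonneg ?_ hε.le
      have := hC0 x
      simp at this
      linarith [le_abs_self C0]
    · rw [le_div_iff₀ hε, Real.norm_eq_abs]
      have := Finset.single_le_sum (f := fun i => |C i|) (fun _ _ => abs_nonneg _) (Finset.mem_univ i)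
      linarith [hC i x, le_abs_self (C i), abs_nonneg C0]
  rw [le_div_iff₀ hε] at hle
  linarith

lemma integrable_growth (hs : Continuous φ)
    (hco : ∃ ε > 0, ∃ C, ∀ x, ε * ‖x‖ - C ≤ φ x) {F : Type*} [NormedAddCommGroup F]
    [NormedSpace ℝ F] [SecondCountableTopology F]
    {f : (Fin n → ℝ) → F} (hf : Continuous f) {K : ℝ} (hK : ∀ x, ‖f x‖ ≤ K * (1 + ‖x‖)) :
    Integrable (fun x => Real.exp (-φ x) • f x) := by
  obtain ⟨ε, hε, C, hC⟩ := hco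
  have hK0 : 0 ≤ K := by
    have := (norm_nonneg _).trans (hK 0)
    simpa using this
  have hI : Integrable (fun x : Fin n → ℝ => (1 + ‖x‖) ^ (-((n + 1 : ℕ) : ℝ))) :=
    integrable_one_add_norm (by simp)
  -- `A` bounds `(1 + r) ^ (n + 2) * exp (-ε r)` for `r ≥ 0`, by one term of the series of `exp`.
  set A := ((n + 2).factorial : ℝ) * Real.exp ε / ε ^ (n + 2) with hA
  refine (hI.const_mul (Real.exp C * K * A)).mono'
    ((Real.continuous_exp.comp hs.neg).smul hf).aestronglyMeasurable
    (Filter.Eventually.of_forall fun x => ?_)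
  have hr : 0 < 1 + ‖x‖ := by positivity
  rw [norm_smul, Real.norm_of_nonneg (Real.exp_pos _).le, Real.rpow_neg hr.le, Real.rpow_natCast]
  have h1 : Real.exp (-φ x) ≤ Real.exp C * Real.exp (-(ε * ‖x‖)) := by
    rw [← Real.exp_add]; exact Real.exp_le_exp.2 (by linarith [hC x])
  have h2 : (1 + ‖x‖) ^ (n + 2) * Real.exp (-(ε * ‖x‖)) ≤ A := by
    have := Real.pow_div_factorial_le_exp (ε * (1 + ‖x‖)) (by positivity) (n + 2)
    rw [div_le_iff₀ (by positivity), mul_pow] at this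
    rw [hA, le_div_iff₀ (by positivity)]
    calc (1 + ‖x‖) ^ (n + 2) * Real.exp (-(ε * ‖x‖)) * ε ^ (n + 2)
        = (ε ^ (n + 2) * (1 + ‖x‖) ^ (n + 2)) * Real.exp (-(ε * ‖x‖)) := by ring
      _ ≤ (Real.exp (ε * (1 + ‖x‖)) * ((n + 2).factorial : ℝ)) * Real.exp (-(ε * ‖x‖)) := by gcongr
      _ = (n + 2).factorial * Real.exp ε := by
        rw [mul_right_comm, ← Real.exp_add]
        ring_nf
  calc Real.exp (-φ x) * ‖f x‖
      ≤ (Real.exp C * Real.exp (-(ε * ‖x‖))) * (K * (1 + ‖x‖)) :=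
        mul_le_mul h1 (hK x) (norm_nonneg _) (by positivity)
    _ = Real.exp C * K * ((1 + ‖x‖) ^ (n + 2) * Real.exp (-(ε * ‖x‖))) * ((1 + ‖x‖) ^ (n + 1))⁻¹ := by
        field_simp
        ring
    _ ≤ _ := by gcongr

lemma linear_growth (hs : ContDiff ℝ (⊤ : ℕ∞) φ) (hc : ConvexOn ℝ Set.univ φ)
    {K : ℝ} (hK : ∀ x, ‖grad φ x‖ ≤ K) :
    ∃ L, ∀ x, ‖φ x‖ ≤ L * (1 + ‖x‖) := by
  have hK0 : 0 ≤ K := (norm_nonneg _).trans (hK 0)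
  refine ⟨|φ 0| + n * K, fun x => ?_⟩
  have h1 := grad_ineq hs hc 0 x
  have h2 := grad_ineq hs hc x 0
  rw [sub_zero] at h1
  rw [zero_sub, dotProduct_neg] at h2
  have hb : ∀ y, |grad φ y ⬝ᵥ x| ≤ n * K * ‖x‖ := fun y => by
    refine (abs_dot_le _ _).trans ?_
    rw [mul_assoc]
    gcongr
    exact hK y
  have b1 := abs_le.1 (hb 0)
  have b2 := abs_le.1 (hb x)
  have : 0 ≤ |φ 0| * ‖x‖ + n * K := by positivity
  rw [Real.norm_eq_abs, abs_le]
  constructor <;> nlinarith [neg_abs_le (φ 0), le_abs_self (φ 0)]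

/-! ### Divergence of an integrable vector field -/

/-- If `div V = u - v` for an integrable field `V`, with `u ≥ 0` and `∫ v ≤ 0`, then `u = 0`:
the divergence has integral zero in the limit of cutoffs, so `∫ u ≤ ∫ v`. No integrability of
`u` or of the derivatives of `V` is required. -/
lemma eq_zero_of_div_eq_sub {V : (Fin n → ℝ) → (Fin n → ℝ)} (hV : ContDiff ℝ 1 V) (hVi : Integrable V)
    {u v : (Fin n → ℝ) → ℝ} (hu : Continuous u) (hv : Continuous v) (hu0 : ∀ x, 0 ≤ u x)
    (hvi : Integrable v) (hdiv : ∀ x, (∑ i, fderiv ℝ (fun y => V y i) x (Pi.single i 1)) = u x - v x)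
    (hle : ∫ x, v x ≤ 0) (x : Fin n → ℝ) : u x = 0 := by
  let b : ContDiffBump (0 : Fin n → ℝ) := ⟨1, 2, one_pos, one_lt_two⟩
  let c : ℕ → ℝ := fun N => ((N : ℝ) + 1)⁻¹
  have hc0 : ∀ N, 0 < c N := fun N => by positivity
  have hct : Filter.Tendsto c Filter.atTop (nhds 0) := by
    simpa [c, one_div] using tendsto_one_div_add_atTop_nhds_zero_nat (𝕜 := ℝ)
  let χ : ℕ → (Fin n → ℝ) → ℝ := fun N y => b (c N • y)
  have hχs : ∀ N, ContDiff ℝ 1 (χ N) := fun N => b.contDiff.comp (contDiff_const_smul (c N))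
  have hχc : ∀ N, HasCompactSupport (χ N) := fun N =>
    b.hasCompactSupport.comp_smul (hc0 N).ne'
  have hχ1 : ∀ N y, c N * ‖y‖ ≤ 1 → χ N y = 1 := fun N y h => by
    refine b.one_of_mem_closedBall ?_
    rw [mem_closedBall_zero_iff, norm_smul, Real.norm_of_nonneg (hc0 N).le]; exact h
  have hχ0 : ∀ N y, 2 ≤ c N * ‖y‖ → χ N y = 0 := fun N y h => by
    refine b.zero_of_le_dist ?_
    rw [dist_zero_right, norm_smul, Real.norm_of_nonneg (hc0 N).le]; exact h
  have hχev : ∀ y : Fin n → ℝ, ∀ᶠ N in Filter.atTop, c N * ‖y‖ ≤ 1 := fun y => by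
    have := hct.mul_const ‖y‖
    rw [zero_mul] at this
    exact this.eventually_le_const one_pos
  have hfd : ∀ N y, fderiv ℝ (χ N) y = c N • fderiv ℝ b (c N • y) := fun N y => by
    exact fderiv_comp_smul (f := b) (c N)
  obtain ⟨D, hD⟩ : ∃ D, ∀ y, ‖fderiv ℝ b y‖ ≤ D :=
    ((b.contDiff (n := 1)).continuous_fderiv (by simp)).bounded_above_of_compact_support
      (b.hasCompactSupport.fderiv ℝ)
  have hVc := hV.continuous
  have hVd : ∀ i, ContDiff ℝ 1 (fun y => V y i) := fun i => (contDiff_pi.1 hV) i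
  -- Integration by parts against the cutoff `χ N`.
  have hparts : ∀ N, ∫ y, χ N y * (u y - v y) = - ∫ y, fderiv ℝ (χ N) y (V y) := by
    intro N
    have hcd : Continuous (fderiv ℝ (χ N)) := (hχs N).continuous_fderiv (by simp)
    have i1 : ∀ i, Integrable (fun y => fderiv ℝ (χ N) y (Pi.single i 1) * V y i) := fun i => by
      refine Continuous.integrable_of_hasCompactSupport
        ((hcd.clm_apply continuous_const).mul (hVd i).continuous) ?_
      exact ((hχc N).fderiv_apply ℝ _).mul_right
    have i2 : ∀ i, Integrable (fun y => χ N y * fderiv ℝ (fun y => V y i) y (Pi.single i 1)) :=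
      fun i => Continuous.integrable_of_hasCompactSupport
        ((hχs N).continuous.mul (((hVd i).continuous_fderiv (by simp)).clm_apply continuous_const))
        (hχc N).mul_right
    have i3 : ∀ i, Integrable (fun y => χ N y * V y i) :=
      fun i => Continuous.integrable_of_hasCompactSupport
        ((hχs N).continuous.mul (hVd i).continuous) (hχc N).mul_right
    have hi : ∀ i, ∫ y, χ N y * fderiv ℝ (fun y => V y i) y (Pi.single i 1)
        = - ∫ y, fderiv ℝ (χ N) y (Pi.single i 1) * V y i := fun i =>
      integral_mul_fderiv_eq_neg_fderiv_mul_of_integrable (i1 i) (i2 i) (i3 i)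
        (fun y _ => (hχs N).differentiable (by simp) y)
        (fun y _ => (hVd i).differentiable (by simp) y)
    simp_rw [← hdiv, Finset.mul_sum]
    rw [integral_finsetSum _ fun i _ => i2 i]
    simp_rw [hi]
    rw [Finset.sum_neg_distrib, ← integral_finsetSum _ fun i _ => i1 i]
    exact congrArg Neg.neg (integral_congr_ae
      (Filter.Eventually.of_forall fun y => (fderiv_eq_grad y (V y)).symm))
  have iu : ∀ N, Integrable (fun y => χ N y * u y) := fun N =>
    ((hχs N).continuous.mul hu).integrable_of_hasCompactSupport (hχc N).mul_right
  have iv : ∀ N, Integrable (fun y => χ N y * v y) := fun N =>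
    ((hχs N).continuous.mul hv).integrable_of_hasCompactSupport (hχc N).mul_right
  have hid : ∀ N, ∫ y, χ N y * u y = (∫ y, χ N y * v y) - ∫ y, fderiv ℝ (χ N) y (V y) := by
    intro N
    have := hparts N
    simp_rw [mul_sub] at this
    rw [integral_sub (iu N) (iv N)] at this
    linarith
  have l1 : Filter.Tendsto (fun N => ∫ y, χ N y * v y) Filter.atTop (nhds (∫ y, v y)) := by
    refine tendsto_integral_of_dominated_convergence (fun y => ‖v y‖)
      (fun N => (iv N).aestronglyMeasurable) hvi.norm ?_ ?_
    · refine fun N => Filter.Eventually.of_forall fun y => ?_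
      rw [norm_mul, Real.norm_of_nonneg (b.nonneg)]
      exact mul_le_of_le_one_left (norm_nonneg _) b.le_one
    · refine Filter.Eventually.of_forall fun y => ?_
      refine tendsto_const_nhds.congr' ?_
      filter_upwards [hχev y] with N hN
      rw [hχ1 N y hN, one_mul]
  have l2 : Filter.Tendsto (fun N => ∫ y, fderiv ℝ (χ N) y (V y)) Filter.atTop (nhds 0) := by
    have hb : ∀ N y, ‖fderiv ℝ (χ N) y (V y)‖ ≤ c N * (D * ‖V y‖) := fun N y => by
      rw [hfd, smul_apply, norm_smul, Real.norm_of_nonneg (hc0 N).le]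
      refine mul_le_mul_of_nonneg_left ?_ (hc0 N).le
      exact (ContinuousLinearMap.le_opNorm _ _).trans
        (mul_le_mul_of_nonneg_right (hD _) (norm_nonneg _))
    have hbi : ∀ N, ‖∫ y, fderiv ℝ (χ N) y (V y)‖ ≤ c N * ∫ y, D * ‖V y‖ := fun N => by
      rw [← integral_const_mul]
      exact norm_integral_le_of_norm_le ((hVi.norm.const_mul D).const_mul _)
        (Filter.Eventually.of_forall (hb N))
    refine squeeze_zero_norm hbi ?_
    simpa using hct.mul_const (∫ y, D * ‖V y‖)
  have l3 : Filter.Tendsto (fun N => ∫ y, χ N y * u y) Filter.atTop (nhds (∫ y, v y)) := by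
    simp_rw [hid]
    simpa using l1.sub l2
  by_contra hne
  obtain ⟨M, hM⟩ := (hχev x).exists
  have hpos : 0 < ∫ y, χ M y * u y := by
    refine ((hχs M).continuous.mul hu).integral_pos_of_hasCompactSupport_nonneg_nonzero
      (hχc M).mul_right (fun y => mul_nonneg b.nonneg (hu0 y)) (x := x) ?_
    rw [hχ1 M x hM, one_mul]; exact hne
  -- For large `N` the cutoff `χ N` equals `1` on the support of `χ M`.
  have hev : ∀ᶠ N in Filter.atTop, ∫ y, χ M y * u y ≤ ∫ y, χ N y * u y := by
    have : ∀ᶠ N in Filter.atTop, c N ≤ c M / 2 := hct.eventually_le_const (half_pos (hc0 M))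
    filter_upwards [this] with N hN
    refine integral_mono (iu M) (iu N) fun y => mul_le_mul_of_nonneg_right ?_ (hu0 y)
    rcases le_or_gt 2 (c M * ‖y‖) with h | h
    · rw [hχ0 M y h]; exact b.nonneg
    · rw [hχ1 N y]
      · exact b.le_one
      · nlinarith [norm_nonneg y]
  have := ge_of_tendsto l3 hev
  linarith

/-- The derivative of the identity `∇φ₂ ∘ T = ∇φ₁`, in matrix form. -/
lemma hess_mul_jac {φ₁ φ₂ : (Fin n → ℝ) → ℝ}
    (hs₁ : ContDiff ℝ (⊤ : ℕ∞) φ₁) (hs₂ : ContDiff ℝ (⊤ : ℕ∞) φ₂)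
    {T : (Fin n → ℝ) → (Fin n → ℝ)} (hT : ContDiff ℝ 1 T) (hTg : ∀ x, grad φ₂ (T x) = grad φ₁ x)
    (x : Fin n → ℝ) :
    hess φ₂ (T x) * LinearMap.toMatrix' (fderiv ℝ T x : (Fin n → ℝ) →ₗ[ℝ] (Fin n → ℝ))
      = hess φ₁ x := by
  have h1 : fderiv ℝ (grad φ₁) x = (fderiv ℝ (grad φ₂) (T x)).comp (fderiv ℝ T x) := by
    have : grad φ₁ = grad φ₂ ∘ T := funext fun y => (hTg y).symm
    rw [this]
    exact fderiv_comp x ((contDiff_grad hs₂).differentiable (by simp) _)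
      (hT.differentiable (by simp) _)
  refine Matrix.toLin'.injective (LinearMap.ext fun v => ?_)
  rw [Matrix.toLin'_mul, LinearMap.comp_apply, Matrix.toLin'_toMatrix', Matrix.toLin'_apply,
    Matrix.toLin'_apply, ← fderiv_grad hs₁, h1, ContinuousLinearMap.comp_apply, fderiv_grad hs₂]
  rfl

/-! ### Transport of measures and the rigidity argument -/

/-- Solutions of `det (Hess φ) = e^{-φ}` with the positivity and growth properties used below:
positive definite Hessian, at least linear growth, `|φ|` bounded by a multiple of `1 + ‖x‖`, and
bounded gradient. -/
structure Sol (φ : (Fin n → ℝ) → ℝ) : Prop where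
  smooth : ContDiff ℝ (⊤ : ℕ∞) φ
  pos : ∀ x, (hess φ x).PosDef
  eq : ∀ x, (hess φ x).det = Real.exp (-(φ x))
  coercive : ∃ ε > 0, ∃ C, ∀ x, ε * ‖x‖ - C ≤ φ x
  growth : ∃ L, ∀ x, ‖φ x‖ ≤ L * (1 + ‖x‖)
  grad_bdd : ∃ K, ∀ x, ‖grad φ x‖ ≤ K

variable {φ₁ φ₂ : (Fin n → ℝ) → ℝ} {T : (Fin n → ℝ) → (Fin n → ℝ)}

lemma det_jac (h₁ : Sol φ₁) (h₂ : Sol φ₂) (hT : ContDiff ℝ 1 T)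
    (hTg : ∀ x, grad φ₂ (T x) = grad φ₁ x) (x : Fin n → ℝ) :
    (LinearMap.toMatrix' (fderiv ℝ T x : (Fin n → ℝ) →ₗ[ℝ] (Fin n → ℝ))).det
      = Real.exp (φ₂ (T x) - φ₁ x) := by
  have h := congrArg Matrix.det (hess_mul_jac h₁.smooth h₂.smooth hT hTg x)
  rw [Matrix.det_mul, h₁.eq, h₂.eq] at h
  rw [sub_eq_add_neg, Real.exp_add, ← h, ← mul_assoc, ← Real.exp_add]
  simp

/-- The map `T` transports the density `e^{-φ₁}` to `e^{-φ₂}`. -/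
lemma abs_det_fderiv_mul (h₁ : Sol φ₁) (h₂ : Sol φ₂) (hT : ContDiff ℝ 1 T)
    (hTg : ∀ x, grad φ₂ (T x) = grad φ₁ x) (x : Fin n → ℝ) :
    |(fderiv ℝ T x).det| * Real.exp (-φ₂ (T x)) = Real.exp (-φ₁ x) := by
  have h := det_jac h₁ h₂ hT hTg x
  rw [LinearMap.det_toMatrix'] at h
  rw [ContinuousLinearMap.det, h, abs_of_pos (Real.exp_pos _), ← Real.exp_add]
  ring_nf

lemma integrable_transport (h₁ : Sol φ₁) (h₂ : Sol φ₂) (hT : ContDiff ℝ 1 T)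
    (hTg : ∀ x, grad φ₂ (T x) = grad φ₁ x) (hTb : Function.Bijective T)
    {F : Type*} [NormedAddCommGroup F] [NormedSpace ℝ F] {g : (Fin n → ℝ) → F}
    (hg : Integrable fun y => Real.exp (-φ₂ y) • g y) :
    Integrable fun x => Real.exp (-φ₁ x) • g (T x) := by
  have h := (integrableOn_image_iff_integrableOn_abs_det_fderiv_smul volume MeasurableSet.univ
    (fun x _ => (hT.differentiable (by simp) x).hasFDerivAt.hasFDerivWithinAt)
    hTb.injective.injOn (fun y => Real.exp (-φ₂ y) • g y)).1
  rw [Set.image_univ, hTb.surjective.range_eq, integrableOn_univ, integrableOn_univ] at h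
  refine (h hg).congr (Filter.Eventually.of_forall fun x => ?_)
  simp only [smul_smul, abs_det_fderiv_mul h₁ h₂ hT hTg]

lemma integral_transport (h₁ : Sol φ₁) (h₂ : Sol φ₂) (hT : ContDiff ℝ 1 T)
    (hTg : ∀ x, grad φ₂ (T x) = grad φ₁ x) (hTb : Function.Bijective T) (g : (Fin n → ℝ) → ℝ) :
    ∫ y, Real.exp (-φ₂ y) • g y = ∫ x, Real.exp (-φ₁ x) • g (T x) := by
  have h := integral_image_eq_integral_abs_det_fderiv_smul volume MeasurableSet.univ
    (fun x _ => (hT.differentiable (by simp) x).hasFDerivAt.hasFDerivWithinAt)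
    hTb.injective.injOn (fun y => Real.exp (-φ₂ y) • g y)
  rw [Set.image_univ, hTb.surjective.range_eq] at h
  simp only [Measure.restrict_univ] at h
  rw [h]
  refine integral_congr_ae (Filter.Eventually.of_forall fun x => ?_)
  simp only [smul_smul, abs_det_fderiv_mul h₁ h₂ hT hTg]

/-- For `p = ∇φ₁ x = ∇φ₂ (T x)` this is `φ₂^*(p) - φ₁^*(p)`, the difference of the Legendre
transforms of `φ₂` and `φ₁` at `p`. -/
noncomputable def gap (φ₁ φ₂ : (Fin n → ℝ) → ℝ) (T : (Fin n → ℝ) → (Fin n → ℝ))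
    (x : Fin n → ℝ) : ℝ :=
  grad φ₁ x ⬝ᵥ (T x - x) - φ₂ (T x) + φ₁ x

/-- The rigidity statement: if the integrated gap is nonpositive, the divergence identity for
`e^{-φ₁} (T x - x)` forces `DT = 1`, so `T` is a translation with `φ₂ ∘ T = φ₁`. -/
lemma translate_of_gap (h₁ : Sol φ₁) (h₂ : Sol φ₂) (hT : ContDiff ℝ 1 T)
    (hTg : ∀ x, grad φ₂ (T x) = grad φ₁ x) (hTb : Function.Bijective T)
    (hgap : ∫ x, Real.exp (-φ₁ x) • gap φ₁ φ₂ T x ≤ 0) :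
    ∃ a, ∀ x, φ₂ (x + a) = φ₁ x := by
  let J : (Fin n → ℝ) → Matrix (Fin n) (Fin n) ℝ := fun x =>
    LinearMap.toMatrix' (fderiv ℝ T x : (Fin n → ℝ) →ₗ[ℝ] (Fin n → ℝ))
  have hTc := hT.continuous
  have hc₁ := h₁.smooth.continuous
  have hc₂ := h₂.smooth.continuous
  have hgc := (contDiff_grad h₁.smooth).continuous
  have hdet : ∀ x, (J x).det = Real.exp (φ₂ (T x) - φ₁ x) := det_jac h₁ h₂ hT hTg
  have hmat := fun x => mat_key (h₁.pos x) (h₂.pos (T x))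
    (hess_mul_jac h₁.smooth h₂.smooth hT hTg x)
  have hlog : ∀ x, Real.log (J x).det = φ₂ (T x) - φ₁ x := fun x => by rw [hdet, Real.log_exp]
  have htr : ∀ x, (J x).trace = ∑ i, fderiv ℝ T x (Pi.single i 1) i := fun x => by
    simp [J, Matrix.trace, LinearMap.toMatrix'_apply]
  let G : (Fin n → ℝ) → ℝ := fun x => (J x).trace - n - Real.log (J x).det
  have hGc : Continuous G := by
    simp only [G, hlog, htr]
    have : Continuous (fderiv ℝ T) := hT.continuous_fderiv (by simp)
    fun_prop
  have hw : ContDiff ℝ 1 (fun x => Real.exp (-φ₁ x)) :=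
    (Real.contDiff_exp.comp h₁.smooth.neg).of_le (by exact_mod_cast le_top)
  have hgapc : Continuous (gap φ₁ φ₂ T) := by
    have : Continuous fun x => grad φ₁ x ⬝ᵥ (T x - x) := hgc.dotProduct (hTc.sub continuous_id)
    unfold gap
    fun_prop
  have hI₁ : Integrable fun x => Real.exp (-φ₁ x) • x :=
    integrable_growth hc₁ h₁.coercive continuous_id (K := 1) (fun x => by simp)
  have hI₂ : Integrable fun x => Real.exp (-φ₁ x) • T x :=
    integrable_transport h₁ h₂ hT hTg hTb (g := fun y => y)
      (integrable_growth hc₂ h₂.coercive continuous_id (K := 1) (fun x => by simp))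
  have hV : Integrable fun x => Real.exp (-φ₁ x) • (T x - x) := by
    simp_rw [smul_sub]; exact hI₂.sub hI₁
  have hgi : Integrable fun x => Real.exp (-φ₁ x) • gap φ₁ φ₂ T x := by
    obtain ⟨L₁, hL₁⟩ := h₁.growth
    obtain ⟨L₂, hL₂⟩ := h₂.growth
    obtain ⟨K, hK⟩ := h₁.grad_bdd
    have i1 := integrable_growth hc₁ h₁.coercive hc₁ hL₁
    have i2 := integrable_transport h₁ h₂ hT hTg hTb
      (integrable_growth hc₂ h₂.coercive hc₂ hL₂)
    have i3 : Integrable fun x => Real.exp (-φ₁ x) • (grad φ₁ x ⬝ᵥ (T x - x)) := by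
      refine (hV.norm.const_mul (n * K)).mono'
        (hw.continuous.smul (hgc.dotProduct (hTc.sub continuous_id))).aestronglyMeasurable
        (Filter.Eventually.of_forall fun x => ?_)
      rw [norm_smul, norm_smul, Real.norm_eq_abs (_ ⬝ᵥ _)]
      calc ‖Real.exp (-φ₁ x)‖ * |grad φ₁ x ⬝ᵥ (T x - x)|
          ≤ ‖Real.exp (-φ₁ x)‖ * (n * (‖grad φ₁ x‖ * ‖T x - x‖)) := by
            gcongr; exact abs_dot_le _ _
        _ ≤ ‖Real.exp (-φ₁ x)‖ * (n * (K * ‖T x - x‖)) := by gcongr; exact hK x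
        _ = _ := by ring
    unfold gap
    simp_rw [smul_add, smul_sub]
    exact (i3.sub i2).add i1
  have hdiv : ∀ x, (∑ i, fderiv ℝ (fun y => (Real.exp (-φ₁ y) • (T y - y)) i) x (Pi.single i 1))
      = Real.exp (-φ₁ x) * G x - Real.exp (-φ₁ x) • gap φ₁ φ₂ T x := by
    intro x
    have hd₁ : HasFDerivAt φ₁ (fderiv ℝ φ₁ x) x :=
      (h₁.smooth.differentiable (by simp) x).hasFDerivAt
    have hdT : HasFDerivAt T (fderiv ℝ T x) x := (hT.differentiable (by simp) x).hasFDerivAt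
    have hi : ∀ i, fderiv ℝ (fun y => (Real.exp (-φ₁ y) • (T y - y)) i) x (Pi.single i 1)
        = Real.exp (-φ₁ x) * (fderiv ℝ T x (Pi.single i 1) i - 1 - grad φ₁ x i * (T x - x) i) := by
      intro i
      have hTi : HasFDerivAt (fun y => T y i - y i) _ x :=
        ((hasFDerivAt_pi'.1 hdT) i).sub ((hasFDerivAt_pi'.1 (hasFDerivAt_id x)) i)
      have hprod : HasFDerivAt (fun y => Real.exp (-φ₁ y) * (T y i - y i)) _ x :=
        hd₁.fun_neg.exp.mul hTi
      simp only [Pi.smul_apply, Pi.sub_apply, smul_eq_mul]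
      rw [hprod.fderiv]
      simp [grad]
      ring
    simp_rw [hi]
    rw [← Finset.mul_sum, Finset.sum_sub_distrib, Finset.sum_sub_distrib, ← htr]
    have hdot : ∑ i, grad φ₁ x i * (T x - x) i = grad φ₁ x ⬝ᵥ (T x - x) := rfl
    rw [hdot]
    simp only [G, hlog, gap, smul_eq_mul]
    simp
    ring
  have hzero := eq_zero_of_div_eq_sub (hw.smul (hT.sub contDiff_id)) hV (hw.continuous.mul hGc)
    (hw.continuous.smul hgapc) (fun x => mul_nonneg (Real.exp_pos _).le (hmat x).1) hgi hdiv hgap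
  have hJ : ∀ x, J x = 1 := fun x =>
    (hmat x).2 ((mul_eq_zero.1 (hzero x)).resolve_left (Real.exp_pos _).ne')
  have hφ : ∀ x, φ₂ (T x) = φ₁ x := fun x => by
    have := hlog x
    rw [hJ, Matrix.det_one, Real.log_one] at this
    linarith
  have hfd : ∀ x, fderiv ℝ T x = ContinuousLinearMap.id ℝ _ := fun x => by
    have h : (fderiv ℝ T x : (Fin n → ℝ) →ₗ[ℝ] (Fin n → ℝ)) = LinearMap.id := by
      apply LinearMap.toMatrix'.injective
      rw [LinearMap.toMatrix'_id]; exact hJ x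
    ext1 v
    exact LinearMap.congr_fun h v
  have hconst : ∀ x, T x - x = T 0 - 0 := fun x => by
    refine is_const_of_fderiv_eq_zero (𝕜 := ℝ) (f := fun y => T y - y)
      ((hT.differentiable (by simp)).sub differentiable_id) (fun y => ?_) x 0
    rw [fderiv_fun_sub (hT.differentiable (by simp) y) differentiableAt_fun_id, hfd, fderiv_fun_id,
      sub_self]
  refine ⟨T 0, fun x => ?_⟩
  have : x + T 0 = T x := by
    have := hconst x
    rw [sub_zero] at this
    rw [← this]; abel
  rw [this, hφ]

lemma sol_of (hs : ContDiff ℝ (⊤ : ℕ∞) φ) (hc : ConvexOn ℝ Set.univ φ)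
    (hMA : ∀ x, (hess φ x).det = Real.exp (-(φ x))) {P : Set (Fin n → ℝ)} (hP : IsCompact P)
    (h0 : (0 : Fin n → ℝ) ∈ interior P) (hg : Set.range (grad φ) = interior P) : Sol φ := by
  obtain ⟨K, hK⟩ := hP.isBounded.exists_norm_le
  have hb : ∀ x, ‖grad φ x‖ ≤ K := fun x => hK _ (interior_subset (hg ▸ Set.mem_range_self x))
  exact ⟨hs, fun x => posDef_hess hs hc x (by rw [hMA]; exact (Real.exp_pos _).ne'), hMA,
    coercive hs hc (hg ▸ isOpen_interior.mem_nhds h0), linear_growth hs hc hb, ⟨K, hb⟩⟩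

end MAUnique

/-- Uniqueness direction of Theorem 2: two smooth convex solutions of the real
Monge–Ampère equation `det (Hess φ) = e^{-φ}` on `ℝⁿ` with gradient image the interior
of the same compact convex body `P` (with `0` in its interior) agree up to a
translation. -/
theorem MongeAmpere_solution_unique_up_to_translation
    (n : ℕ) (P : Set (Fin n → ℝ))
    (hPcpt : IsCompact P) (hPconv : Convex ℝ P)
    (hP0 : (0 : Fin n → ℝ) ∈ interior P)
    (φ₁ φ₂ : (Fin n → ℝ) → ℝ)
    (hsmooth₁ : ContDiff ℝ (⊤ : ℕ∞) φ₁) (hconv₁ : ConvexOn ℝ Set.univ φ₁)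
    (hsmooth₂ : ContDiff ℝ (⊤ : ℕ∞) φ₂) (hconv₂ : ConvexOn ℝ Set.univ φ₂)
    (hMA₁ : ∀ x, (hess φ₁ x).det = Real.exp (-(φ₁ x)))
    (hMA₂ : ∀ x, (hess φ₂ x).det = Real.exp (-(φ₂ x)))
    (hgrad₁ : Set.range (grad φ₁) = interior P)
    (hgrad₂ : Set.range (grad φ₂) = interior P) :
    ∃ a : Fin n → ℝ, ∀ x, φ₂ x = φ₁ (x + a) := by
  have h₁ := MAUnique.sol_of hsmooth₁ hconv₁ hMA₁ hPcpt hP0 hgrad₁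
  have h₂ := MAUnique.sol_of hsmooth₂ hconv₂ hMA₂ hPcpt hP0 hgrad₂
  obtain ⟨T, hT, hTg⟩ := MAUnique.exists_transport hsmooth₁ hsmooth₂ h₂.pos
    (hgrad₁.trans hgrad₂.symm).le
  obtain ⟨S, hS, hSg⟩ := MAUnique.exists_transport hsmooth₂ hsmooth₁ h₁.pos
    (hgrad₂.trans hgrad₁.symm).le
  have hST : Function.LeftInverse S T := fun x =>
    MAUnique.grad_inj hsmooth₁ h₁.pos (by rw [hSg, hTg])
  have hTS : Function.LeftInverse T S := fun x =>
    MAUnique.grad_inj hsmooth₂ h₂.pos (by rw [hTg, hSg])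
  have hTb : Function.Bijective T := ⟨hST.injective, hTS.surjective⟩
  have hSb : Function.Bijective S := ⟨hTS.injective, hST.surjective⟩
  -- The two gap functionals are opposite to each other, so one of them is nonpositive.
  have hneg : ∫ y, Real.exp (-φ₂ y) • MAUnique.gap φ₂ φ₁ S y
      = - ∫ x, Real.exp (-φ₁ x) • MAUnique.gap φ₁ φ₂ T x := by
    rw [MAUnique.integral_transport h₁ h₂ hT hTg hTb, ← integral_neg]
    refine integral_congr_ae (Filter.Eventually.of_forall fun x => ?_)
    simp only [MAUnique.gap, hST x, hTg x, dotProduct_sub, smul_eq_mul]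
    ring
  rcases le_total (∫ x, Real.exp (-φ₁ x) • MAUnique.gap φ₁ φ₂ T x) 0 with h | h
  · obtain ⟨a, ha⟩ := MAUnique.translate_of_gap h₁ h₂ hT hTg hTb h
    exact ⟨-a, fun x => by rw [← ha]; simp⟩
  · obtain ⟨a, ha⟩ := MAUnique.translate_of_gap h₂ h₁ hS hSg hSb (by rw [hneg]; linarith)
    exact ⟨a, fun x => (ha x).symm⟩
end

section
/- Let φ : ℝⁿ → ℝ be a smooth convex function with ∫_{ℝⁿ} e^{−φ(x)} dx < ∞. Then ∫_{ℝⁿ} ∇φ(x) e^{−φ(x)} dx = 0 (as a vector-valued integral in ℝⁿ); in particular the integrand is integrable. -/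
/-!
Write `f = e^{-φ}`. Once each `∂ᵢφ · f = -∂ᵢf` is known to be integrable, its integral vanishes by
integration by parts against the constant function `1`, so the point is integrability.

* `φ` is bounded below: a very negative value at `y` forces, by convexity, very negative values on
  the whole ball of radius `1/2` around `y / 2`, whose volume does not depend on `y`, and this
  contradicts `∫ f < ∞` (`exists_lower_bound`).
* The radial derivative `Dφ(x) x` is integrable against `f`. The dilation `x ↦ (1 + t) x` gives
  `∫ (f(x) - f((1 + t) x)) dx = (1 - (1 + t)⁻ⁿ) ∫ f`. By convexity and the lower bound,
  `f((1 + t) x) ≤ e^{K t} f(x)` with `K = φ 0 - inf φ`, so Fatou's lemma applies to the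
  nonnegative quotients `(e^{K t} f(x) - f((1 + t) x)) / t` and gives
  `∫ (K + Dφ(x) x) f ≤ (K + n) ∫ f` (`integrable_radial`).
* The radial derivative controls all the others: the tangent plane at `x`, evaluated at `± v`,
  gives `|Dφ(x) v| ≤ max (φ v) (φ (-v)) - φ x + Dφ(x) x` (`integrable_directional`).
-/

open MeasureTheory

open Filter Topology Set

/-- A convex function lies above its tangent planes. -/
lemma tangent_le {n : ℕ} {φ : (Fin n → ℝ) → ℝ} (hd : Differentiable ℝ φ)
    (hconv : ConvexOn ℝ univ φ) (x y : Fin n → ℝ) :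
    φ x + fderiv ℝ φ x (y - x) ≤ φ y := by
  have hline : ConvexOn ℝ univ (φ ∘ AffineMap.lineMap (k := ℝ) x y) := by
    simpa using hconv.comp_affineMap (AffineMap.lineMap (k := ℝ) x y)
  have hder : HasDerivAt (φ ∘ AffineMap.lineMap (k := ℝ) x y) (fderiv ℝ φ x (y - x)) 0 := by
    have h := (hd (AffineMap.lineMap (k := ℝ) x y (0 : ℝ))).hasFDerivAt.comp_hasDerivAt (0 : ℝ)
      (AffineMap.hasDerivAt_lineMap (a := x) (b := y) (x := (0 : ℝ)))
    simpa using h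
  have h := hline.le_slope_of_hasDerivAt (mem_univ 0) (mem_univ 1) one_pos hder
  simp [slope_def_field] at h
  rw [map_sub]
  linarith

lemma exists_lower_bound {n : ℕ} {φ : (Fin n → ℝ) → ℝ} (hc : Continuous φ)
    (hconv : ConvexOn ℝ univ φ) (hint : Integrable (fun x => Real.exp (-(φ x)))) :
    ∃ m : ℝ, ∀ x, m ≤ φ x := by
  obtain ⟨C, hC⟩ := (isCompact_closedBall (0 : Fin n → ℝ) 1).bddAbove_image hc.continuousOn
  have hC' : ∀ u, ‖u‖ ≤ 1 → φ u ≤ C := fun u hu =>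
    hC (mem_image_of_mem _ (by simpa using hu))
  set I := ∫ x, Real.exp (-(φ x)) with hI
  set c := volume.real (Metric.ball (0 : Fin n → ℝ) (1 / 2)) with hcdef
  have hcpos : 0 < c :=
    ENNReal.toReal_pos (Metric.measure_ball_pos _ _ (by norm_num)).ne' measure_ball_lt_top.ne
  have key : ∀ y, c * Real.exp (-((φ y + C) / 2)) ≤ I := by
    intro y
    set B := Metric.ball ((1 / 2 : ℝ) • y) (1 / 2)
    have hvol : volume.real B = c := by
      simp only [B, hcdef, Measure.real, Measure.addHaar_ball_center]
    have hB : ∀ z ∈ B, Real.exp (-((φ y + C) / 2)) ≤ Real.exp (-(φ z)) := by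
      intro z hz
      apply Real.exp_le_exp.2
      -- `z` is the midpoint of `y` and a point of the unit ball
      have hu : ‖(2 : ℝ) • z - y‖ ≤ 1 := by
        have : (2 : ℝ) • z - y = (2 : ℝ) • (z - (1 / 2 : ℝ) • y) := by
          rw [smul_sub, smul_smul]; norm_num
        rw [this, norm_smul]
        have := mem_ball_iff_norm.1 hz
        norm_num at this ⊢
        linarith
      have h := hconv.2 (mem_univ y) (mem_univ ((2 : ℝ) • z - y))
        (by norm_num : (0 : ℝ) ≤ 1 / 2) (by norm_num : (0 : ℝ) ≤ 1 / 2) (by norm_num)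
      have hz' : (1 / 2 : ℝ) • y + (1 / 2 : ℝ) • ((2 : ℝ) • z - y) = z := by
        rw [smul_sub, smul_smul]; norm_num
      rw [hz'] at h
      have := hC' _ hu
      simp only [smul_eq_mul] at h
      linarith
    calc c * Real.exp (-((φ y + C) / 2)) = ∫ _ in B, Real.exp (-((φ y + C) / 2)) := by
          rw [setIntegral_const, hvol, smul_eq_mul]
      _ ≤ ∫ z in B, Real.exp (-(φ z)) :=
          setIntegral_mono_on (integrableOn_const measure_ball_lt_top.ne) hint.integrableOn
            measurableSet_ball hB
      _ ≤ I := setIntegral_le_integral hint (Eventually.of_forall fun _ => (Real.exp_pos _).le)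
  refine ⟨-(2 * (I / c)) - C, fun y => ?_⟩
  have h1 : Real.exp (-((φ y + C) / 2)) ≤ I / c := by
    rw [le_div_iff₀ hcpos, mul_comm]; exact key y
  have h2 := Real.add_one_le_exp (-((φ y + C) / 2))
  linarith

/-- The radial derivative of `φ`, shifted by a constant that makes it nonnegative, is integrable
against `e^{-φ}`. -/
lemma integrable_radial {n : ℕ} {φ : (Fin n → ℝ) → ℝ} (hsmooth : ContDiff ℝ 1 φ)
    (hconv : ConvexOn ℝ univ φ) (hint : Integrable (fun x => Real.exp (-(φ x))))
    {m : ℝ} (hm : ∀ x, m ≤ φ x) :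
    Integrable (fun x => (φ 0 - m + fderiv ℝ φ x x) * Real.exp (-(φ x))) := by
  have hd : Differentiable ℝ φ := hsmooth.differentiable one_ne_zero
  have hφ : Continuous φ := hd.continuous
  have hfd : Continuous fun x => fderiv ℝ φ x x :=
    (hsmooth.continuous_fderiv one_ne_zero).clm_apply continuous_id
  set K := φ 0 - m with hK
  set I := ∫ x, Real.exp (-(φ x)) with hI
  have hrad : ∀ x, 0 ≤ K + fderiv ℝ φ x x := by
    intro x
    have h := tangent_le hd hconv x 0
    simp only [zero_sub, map_neg] at h
    linarith [hm x]
  let u : ℝ → (Fin n → ℝ) → ℝ := fun t x =>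
    t⁻¹ * (Real.exp (K * t) * Real.exp (-(φ x)) - Real.exp (-(φ ((1 + t) • x))))
  have hu0 : ∀ t, 0 < t → ∀ x, 0 ≤ u t x := by
    intro t ht x
    have h := tangent_le hd hconv x ((1 + t) • x)
    have e : (1 + t) • x - x = t • x := by rw [add_smul, one_smul, add_sub_cancel_left]
    rw [e, map_smul, smul_eq_mul] at h
    have h' := mul_nonneg ht.le (hrad x)
    refine mul_nonneg (inv_nonneg.2 ht.le) (sub_nonneg.2 ?_)
    rw [← Real.exp_add]
    apply Real.exp_le_exp.2
    nlinarith
  have hulim : ∀ x, Tendsto (fun t => u t x) (𝓝[>] 0)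
      (𝓝 ((K + fderiv ℝ φ x x) * Real.exp (-(φ x)))) := by
    intro x
    have h1 : HasDerivAt (fun t : ℝ => Real.exp (K * t)) K 0 := by
      simpa using ((hasDerivAt_id (0 : ℝ)).const_mul K).exp
    have h2 : HasDerivAt (fun t : ℝ => (1 + t) • x) x 0 := by
      simpa using ((hasDerivAt_id (0 : ℝ)).const_add 1).smul_const x
    have h3 : HasDerivAt (fun t : ℝ => φ ((1 + t) • x)) (fderiv ℝ φ x x) 0 := by
      have h4 : HasFDerivAt φ (fderiv ℝ φ x) ((1 + (0 : ℝ)) • x) := by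
        simpa using (hd x).hasFDerivAt
      exact h4.comp_hasDerivAt (0 : ℝ) h2
    have h5 := ((h1.mul_const (Real.exp (-(φ x)))).sub h3.neg.exp).tendsto_slope_zero_right
    convert h5 using 2
    · simp [u]
    · simp; ring
  have huint : ∀ t, 0 < t → Integrable (u t) := by
    intro t ht
    exact ((hint.const_mul _).sub (hint.comp_smul (by positivity))).const_mul _
  have huI : ∀ t, 0 < t → ∫ x, u t x = t⁻¹ * (Real.exp (K * t) - ((1 + t) ^ n)⁻¹) * I := by
    intro t ht
    have h := Measure.integral_comp_smul volume (fun x : Fin n → ℝ => Real.exp (-(φ x))) (1 + t)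
    have hpos : 0 ≤ ((1 + t) ^ n)⁻¹ := by positivity
    simp only [Module.finrank_fin_fun, abs_of_nonneg hpos, smul_eq_mul] at h
    simp only [u]
    rw [integral_const_mul, integral_sub (hint.const_mul _) (hint.comp_smul (by positivity)),
      integral_const_mul, h]
    ring
  have hIlim : Tendsto (fun t : ℝ => t⁻¹ * (Real.exp (K * t) - ((1 + t) ^ n)⁻¹) * I) (𝓝[>] 0)
      (𝓝 ((K + n) * I)) := by
    have h1 : HasDerivAt (fun t : ℝ => Real.exp (K * t)) K 0 := by
      simpa using ((hasDerivAt_id (0 : ℝ)).const_mul K).exp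
    have h2 : HasDerivAt (fun t : ℝ => ((1 + t) ^ n)⁻¹) (-(n : ℝ)) 0 := by
      simpa using (((hasDerivAt_id (0 : ℝ)).const_add 1).fun_pow n).fun_inv (by simp)
    have h5 := ((h1.sub h2).tendsto_slope_zero_right).mul_const I
    convert h5 using 2
    · simp
    · ring
  refine ⟨((continuous_const.add hfd).mul (Real.continuous_exp.comp hφ.neg)).aestronglyMeasurable,
    ?_⟩
  rw [hasFiniteIntegral_iff_ofReal
    (Eventually.of_forall fun x => mul_nonneg (hrad x) (Real.exp_pos _).le)]
  calc ∫⁻ x, ENNReal.ofReal ((K + fderiv ℝ φ x x) * Real.exp (-(φ x)))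
      = ∫⁻ x, liminf (fun t => ENNReal.ofReal (u t x)) (𝓝[>] 0) := by
        congr 1 with x
        exact ((ENNReal.tendsto_ofReal (hulim x)).liminf_eq).symm
    _ ≤ liminf (fun t => ∫⁻ x, ENNReal.ofReal (u t x)) (𝓝[>] 0) := by
        refine lintegral_liminf_le fun t => ?_
        have : Continuous (u t) := by fun_prop
        exact this.measurable.ennreal_ofReal
    _ = ENNReal.ofReal ((K + n) * I) := by
        apply Tendsto.liminf_eq
        refine (ENNReal.tendsto_ofReal hIlim).congr' ?_
        filter_upwards [self_mem_nhdsWithin] with t ht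
        rw [← huI t ht, ofReal_integral_eq_lintegral_ofReal (huint t ht)
          (Eventually.of_forall (hu0 t ht))]
    _ < ⊤ := ENNReal.ofReal_lt_top

lemma integrable_directional {n : ℕ} {φ : (Fin n → ℝ) → ℝ} (hsmooth : ContDiff ℝ 1 φ)
    (hconv : ConvexOn ℝ univ φ) (hint : Integrable (fun x => Real.exp (-(φ x))))
    (v : Fin n → ℝ) :
    Integrable (fun x => Real.exp (-(φ x)) * fderiv ℝ φ x v) := by
  have hd : Differentiable ℝ φ := hsmooth.differentiable one_ne_zero
  have hφ : Continuous φ := hd.continuous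
  obtain ⟨m, hm⟩ := exists_lower_bound hφ hconv hint
  set C := max (φ v) (φ (-v))
  refine ((integrable_radial hsmooth hconv hint hm).add (hint.const_mul (C - φ 0))).mono' ?_ ?_
  · exact ((Real.continuous_exp.comp hφ.neg).mul
      ((hsmooth.continuous_fderiv one_ne_zero).clm_apply continuous_const)).aestronglyMeasurable
  · refine Eventually.of_forall fun x => ?_
    have h1 := tangent_le hd hconv x v
    have h2 := tangent_le hd hconv x (-v)
    rw [map_sub] at h1 h2
    rw [map_neg] at h2
    have hb : |fderiv ℝ φ x v| ≤ C - m + fderiv ℝ φ x x := by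
      rw [abs_le]
      constructor <;> linarith [hm x, le_max_left (φ v) (φ (-v)), le_max_right (φ v) (φ (-v))]
    rw [Real.norm_eq_abs, abs_mul, abs_of_pos (Real.exp_pos _)]
    simp only [Pi.add_apply]
    have := mul_le_mul_of_nonneg_left hb (Real.exp_pos (-(φ x))).le
    linarith

lemma integral_directional {n : ℕ} {φ : (Fin n → ℝ) → ℝ} (hsmooth : ContDiff ℝ 1 φ)
    (hconv : ConvexOn ℝ univ φ) (hint : Integrable (fun x => Real.exp (-(φ x))))
    (v : Fin n → ℝ) :
    ∫ x, Real.exp (-(φ x)) * fderiv ℝ φ x v = 0 := by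
  have hd : Differentiable ℝ φ := hsmooth.differentiable one_ne_zero
  have hfd : ∀ x, fderiv ℝ (fun x => Real.exp (-(φ x))) x v =
      -(Real.exp (-(φ x)) * fderiv ℝ φ x v) := by
    intro x
    rw [((hd x).hasFDerivAt.fun_neg.exp).fderiv]
    simp
  have h := integral_mul_fderiv_eq_neg_fderiv_mul_of_integrable (μ := volume)
    (f := fun _ : Fin n → ℝ => (1 : ℝ)) (g := fun x => Real.exp (-(φ x))) (v := v)
    (by simp)
    (by simp only [hfd, one_mul]; exact (integrable_directional hsmooth hconv hint v).neg)
    (by simpa using hint)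
    (fun x _ => differentiableAt_const _)
    (fun x _ => (hd x).neg.exp)
  simpa [hfd, integral_neg] using h

/-- For a smooth convex `φ : ℝⁿ → ℝ` with `∫ e^{-φ} < ∞`, the vector-valued integral
`∫ ∇φ e^{-φ}` is well defined (the integrand is integrable) and vanishes. -/
theorem integral_grad_exp_neg_eq_zero
    (n : ℕ) (φ : (Fin n → ℝ) → ℝ)
    (hsmooth : ContDiff ℝ (⊤ : ℕ∞) φ) (hconv : ConvexOn ℝ Set.univ φ)
    (hint : Integrable (fun x => Real.exp (-(φ x)))) :
    Integrable (fun x => Real.exp (-(φ x)) • grad φ x) ∧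
    (∫ x, Real.exp (-(φ x)) • grad φ x) = (0 : Fin n → ℝ) := by
  have hs : ContDiff ℝ 1 φ := hsmooth.of_le (by exact_mod_cast le_top)
  have hcoord : ∀ i, Integrable (fun x => (Real.exp (-(φ x)) • grad φ x) i) := fun i => by
    simpa [grad] using integrable_directional hs hconv hint (Pi.single i 1)
  refine ⟨Integrable.of_eval hcoord, ?_⟩
  ext i
  rw [eval_integral hcoord]
  simpa [grad] using integral_directional hs hconv hint (Pi.single i 1)
end

section
/- Let v : ℝⁿ × ℝ → ℝ be a convex function. Then for all t₀, t₁ ∈ ℝ and all s ∈ [0,1], one has ∫_{ℝⁿ} e^{−v(p, (1−s)t₀ + s t₁)} dp ≥ (∫_{ℝⁿ} e^{−v(p, t₀)} dp)^{1−s} · (∫_{ℝⁿ} e^{−v(p, t₁)} dp)^{s}. Equivalently, the function t ↦ −log ∫_{ℝⁿ} e^{−v(p,t)} dp is convex. -/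
/-!
The theorem is the log-concave case of the Prékopa–Leindler inequality
(`prekopaLeindler`): if `f x ^ a * g y ^ b ≤ h (a x + b y)` for all `x, y`, where `a, b > 0` and
`a + b = 1`, then `(∫ f) ^ a * (∫ g) ^ b ≤ ∫ h`. Convexity of `v` gives this hypothesis for
`f = e^{-v(·, t₀)}`, `g = e^{-v(·, t₁)}` and `h = e^{-v(·, (1 - s) t₀ + s t₁)}`.

Prékopa–Leindler is proved by induction on the dimension: by the inductive hypothesis on the
slices, the marginals of `f, g, h` in the first coordinate satisfy the same hypothesis on `ℝ`, so
Tonelli reduces everything to dimension one. Marginals can be infinite, so all functions take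
values in `[0, ∞]`.

In dimension one, suppose first that `sup f = sup g = 1`. For `0 < t < 1` the superlevel sets
`{f > t}` and `{g > t}` are nonempty and `{h > t}` contains `a {f > t} + b {g > t}`. The
one-dimensional Brunn–Minkowski inequality `|A| + |B| ≤ |A + B|` and integration over `t` give
`a ∫ f + b ∫ g ≤ ∫ h`, which is stronger than the claim by the weighted AM–GM inequality. Bounded
functions reduce to this case by scaling, and general ones by truncation and monotone convergence.
-/

open MeasureTheory

namespace PrekopaLeindler

open Set
open scoped ENNReal Pointwise

/-! ### Brunn–Minkowski on the line -/

/-- If `max K = p` and `min L = q`, then `K + q` and `p + L` both lie in `C` and meet at most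
in `p + q`. -/
lemma volume_add_le_of_isCompact {K L C : Set ℝ} (hK : IsCompact K) (hL : IsCompact L)
    (hK0 : K.Nonempty) (hL0 : L.Nonempty) (h : ∀ x ∈ K, ∀ y ∈ L, x + y ∈ C) :
    volume K + volume L ≤ volume C := by
  obtain ⟨p, hpK, hp⟩ := hK.exists_isGreatest hK0
  obtain ⟨q, hqL, hq⟩ := hL.exists_isLeast hL0
  have h1 : volume ((fun x => x + q) '' K) = volume K := by
    rw [image_add_right, measure_preimage_add_right]
  have h2 : volume ((fun x => p + x) '' L) = volume L := by
    rw [image_add_left, measure_preimage_add]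
  have hdisj : AEDisjoint volume ((fun x => x + q) '' K) ((fun x => p + x) '' L) := by
    refine measure_mono_null (t := {p + q}) ?_ (by simp)
    rintro z ⟨⟨x, hx, rfl⟩, ⟨y, hy, hxy⟩⟩
    have := hp hx
    have := hq hy
    simp only at hxy
    simp only [mem_singleton_iff]
    linarith
  rw [← h1, ← h2, ← measure_union₀ ?_ hdisj]
  · refine measure_mono (union_subset ?_ ?_)
    · rintro _ ⟨x, hx, rfl⟩
      exact h x hx q hqL
    · rintro _ ⟨y, hy, rfl⟩
      exact h p hpK y hy
  · exact (hL.image (by fun_prop)).measurableSet.nullMeasurableSet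

lemma volume_add_le {A B C : Set ℝ} (hA : MeasurableSet A) (hB : MeasurableSet B)
    (hA0 : A.Nonempty) (hB0 : B.Nonempty) (h : ∀ x ∈ A, ∀ y ∈ B, x + y ∈ C) :
    volume A + volume B ≤ volume C := by
  obtain ⟨p, hp⟩ := hA0
  obtain ⟨q, hq⟩ := hB0
  rw [hA.measure_eq_iSup_isCompact, hB.measure_eq_iSup_isCompact]
  simp only [iSup_and', iSup_subtype']
  have : Nonempty {K : Set ℝ // K ⊆ A ∧ IsCompact K} := ⟨⟨∅, by simp⟩⟩
  have : Nonempty {K : Set ℝ // K ⊆ B ∧ IsCompact K} := ⟨⟨∅, by simp⟩⟩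
  refine ENNReal.iSup_add_iSup_le ?_
  rintro ⟨K, hKA, hK⟩ ⟨L, hLB, hL⟩
  -- `K` or `L` may be empty, so a point is adjoined to each.
  refine (add_le_add (measure_mono (subset_insert p K)) (measure_mono (subset_insert q L))).trans
    (volume_add_le_of_isCompact (hK.insert p) (hL.insert q) ⟨p, by simp⟩ ⟨q, by simp⟩ ?_)
  intro x hx y hy
  exact h x (insert_subset hp hKA hx) y (insert_subset hq hLB hy)

lemma volume_convexComb_le {a b : ℝ} (ha : 0 < a) (hb : 0 < b) {A B C : Set ℝ}
    (hA : MeasurableSet A) (hB : MeasurableSet B) (hA0 : A.Nonempty) (hB0 : B.Nonempty)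
    (h : ∀ x ∈ A, ∀ y ∈ B, a * x + b * y ∈ C) :
    ENNReal.ofReal a * volume A + ENNReal.ofReal b * volume B ≤ volume C := by
  have := volume_add_le (C := C) (hA.const_smul₀ a) (hB.const_smul₀ b) (hA0.smul_set (a := a))
    (hB0.smul_set (a := b)) (by
      rintro _ ⟨x, hx, rfl⟩ _ ⟨y, hy, rfl⟩
      exact h x hx y hy)
  simpa [Measure.addHaar_smul, abs_of_pos ha, abs_of_pos hb] using this

/-! ### Prékopa–Leindler on the line -/

lemma lintegral_eq_lintegral_superlevel {f : ℝ → ℝ≥0∞} (hf : Measurable f) (h1 : ∀ x, f x ≤ 1) :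
    ∫⁻ x, f x = ∫⁻ t in Ioo (0 : ℝ) 1, volume {x | ENNReal.ofReal t < f x} := by
  have hfin : ∀ x, f x ≠ ∞ := fun x => ((h1 x).trans_lt ENNReal.one_lt_top).ne
  have key := lintegral_eq_lintegral_meas_lt (volume : Measure ℝ) (f := fun x => (f x).toReal)
    (Filter.Eventually.of_forall fun x => ENNReal.toReal_nonneg) hf.ennreal_toReal.aemeasurable
  simp only [ENNReal.ofReal_toReal (hfin _)] at key
  rw [key, ← Ioo_union_Ici_eq_Ioi (zero_lt_one' ℝ),
    lintegral_union measurableSet_Ici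
      (Set.disjoint_left.2 fun x hx hx' => absurd hx.2 (not_lt.2 hx'))]
  have hz : ∫⁻ t in Ici (1 : ℝ), volume {x | t < (f x).toReal} = 0 := by
    rw [setLIntegral_congr_fun (g := fun _ => 0) measurableSet_Ici]
    · simp
    · intro t ht
      have : {x | t < (f x).toReal} = ∅ := by
        ext x
        simp only [mem_ofPred_eq, mem_empty_iff_false, iff_false, not_lt]
        exact (ENNReal.toReal_mono ENNReal.one_ne_top (h1 x)).trans (by simpa using ht)
      simp [this]
  rw [hz, add_zero]
  refine setLIntegral_congr_fun measurableSet_Ioo fun t ht => ?_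
  simp only [ENNReal.ofReal_lt_iff_lt_toReal ht.1.le (hfin _)]

/-- The hypothesis of the Prékopa–Leindler inequality with weights `a` and `b`. -/
def Dominates {E : Type*} [AddCommGroup E] [Module ℝ E] (a b : ℝ) (f g h : E → ℝ≥0∞) : Prop :=
  ∀ x y, f x ^ a * g y ^ b ≤ h (a • x + b • y)

lemma geom_mean_le_arith_mean {a b : ℝ} (ha : 0 < a) (hb : 0 < b) (hab : a + b = 1)
    (x y : ℝ≥0∞) : x ^ a * y ^ b ≤ ENNReal.ofReal a * x + ENNReal.ofReal b * y := by
  rcases eq_or_ne x ∞ with rfl | hx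
  · simp [ENNReal.mul_top, ha]
  rcases eq_or_ne y ∞ with rfl | hy
  · simp [ENNReal.mul_top, hb]
  lift x to NNReal using hx
  lift y to NNReal using hy
  lift a to NNReal using ha.le
  lift b to NNReal using hb.le
  rw [← ENNReal.coe_rpow_of_nonneg _ a.coe_nonneg, ← ENNReal.coe_rpow_of_nonneg _ b.coe_nonneg]
  simp only [ENNReal.ofReal_coe_nnreal]
  exact_mod_cast NNReal.geom_mean_le_arith_mean2_weighted a b x y (by exact_mod_cast hab)

lemma line_of_iSup_eq_one {a b : ℝ} (ha : 0 < a) (hb : 0 < b) (hab : a + b = 1)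
    {f g h : ℝ → ℝ≥0∞} (hf : Measurable f) (hg : Measurable g) (hh : Measurable h)
    (hf1 : ⨆ x, f x = 1) (hg1 : ⨆ x, g x = 1) (H : Dominates a b f g h) :
    (∫⁻ x, f x) ^ a * (∫⁻ x, g x) ^ b ≤ ∫⁻ x, h x := by
  have hf1' : ∀ x, f x ≤ 1 := fun x => hf1 ▸ le_iSup f x
  have hg1' : ∀ x, g x ≤ 1 := fun x => hg1 ▸ le_iSup g x
  refine (geom_mean_le_arith_mean ha hb hab _ _).trans ?_
  refine le_trans ?_ (lintegral_mono (fun x => min_le_left (h x) 1))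
  rw [lintegral_eq_lintegral_superlevel hf hf1', lintegral_eq_lintegral_superlevel hg hg1',
    lintegral_eq_lintegral_superlevel (hh.min measurable_const) fun x => min_le_right _ _,
    ← lintegral_const_mul' _ _ ENNReal.ofReal_ne_top,
    ← lintegral_const_mul' _ _ ENNReal.ofReal_ne_top]
  refine (le_lintegral_add _ _).trans (setLIntegral_mono' measurableSet_Ioo fun t ht => ?_)
  have ht1 : ENNReal.ofReal t < 1 := by simpa using ht.2
  obtain ⟨x₀, hx₀⟩ := lt_iSup_iff.1 (hf1.symm ▸ ht1)
  obtain ⟨y₀, hy₀⟩ := lt_iSup_iff.1 (hg1.symm ▸ ht1)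
  refine volume_convexComb_le ha hb (measurableSet_lt measurable_const hf)
    (measurableSet_lt measurable_const hg) ⟨x₀, hx₀⟩ ⟨y₀, hy₀⟩
    fun x hx y hy => lt_min (lt_of_lt_of_le ?_ (H x y)) ht1
  calc ENNReal.ofReal t = ENNReal.ofReal t ^ a * ENNReal.ofReal t ^ b := by
        rw [← ENNReal.rpow_add_of_nonneg _ _ ha.le hb.le, hab, ENNReal.rpow_one]
    _ < f x ^ a * g y ^ b :=
        ENNReal.mul_lt_mul (ENNReal.rpow_lt_rpow hx ha) (ENNReal.rpow_lt_rpow hy hb)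

lemma line_of_bounded {a b : ℝ} (ha : 0 < a) (hb : 0 < b) (hab : a + b = 1)
    {f g h : ℝ → ℝ≥0∞} (hf : Measurable f) (hg : Measurable g) (hh : Measurable h)
    (hf1 : ⨆ x, f x ≠ ∞) (hg1 : ⨆ x, g x ≠ ∞) (H : Dominates a b f g h) :
    (∫⁻ x, f x) ^ a * (∫⁻ x, g x) ^ b ≤ ∫⁻ x, h x := by
  rcases eq_or_ne (⨆ x, f x) 0 with h0 | hM
  · have : ∀ x, f x = 0 := fun x => le_zero_iff.1 ((le_iSup f x).trans h0.le)
    simp [this, ha]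
  rcases eq_or_ne (⨆ x, g x) 0 with h0 | hN
  · have : ∀ x, g x = 0 := fun x => le_zero_iff.1 ((le_iSup g x).trans h0.le)
    simp [this, hb]
  set M := ⨆ x, f x with hMdef
  set N := ⨆ x, g x with hNdef
  have scale : ∀ x y : ℝ≥0∞,
      (M⁻¹ * x) ^ a * (N⁻¹ * y) ^ b = (M⁻¹ ^ a * N⁻¹ ^ b) * (x ^ a * y ^ b) := by
    intro x y
    rw [ENNReal.mul_rpow_of_nonneg _ _ ha.le, ENNReal.mul_rpow_of_nonneg _ _ hb.le]
    ring
  have hP0 : M⁻¹ ^ a * N⁻¹ ^ b ≠ 0 := by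
    simp [ENNReal.rpow_eq_zero_iff, hf1, hg1, ha.not_gt, hb.not_gt]
  have hPt : M⁻¹ ^ a * N⁻¹ ^ b ≠ ∞ :=
    ENNReal.mul_ne_top (ENNReal.rpow_ne_top_of_nonneg ha.le (by simpa using hM))
      (ENNReal.rpow_ne_top_of_nonneg hb.le (by simpa using hN))
  have key := line_of_iSup_eq_one ha hb hab (f := fun x => M⁻¹ * f x) (g := fun x => N⁻¹ * g x)
    (h := fun x => (M⁻¹ ^ a * N⁻¹ ^ b) * h x) (hf.const_mul _) (hg.const_mul _) (hh.const_mul _)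
    (by rw [← ENNReal.mul_iSup, ENNReal.inv_mul_cancel hM hf1])
    (by rw [← ENNReal.mul_iSup, ENNReal.inv_mul_cancel hN hg1])
    (fun x y => by rw [scale]; exact mul_le_mul_right (H x y) _)
  rw [lintegral_const_mul _ hf, lintegral_const_mul _ hg, lintegral_const_mul _ hh, scale] at key
  exact (ENNReal.mul_le_mul_iff_right hP0 hPt).1 key

lemma lintegral_eq_iSup_truncate {f : ℝ → ℝ≥0∞} (hf : Measurable f) :
    ∫⁻ x, f x = ⨆ k : ℕ, ∫⁻ x, min (f x) k := by
  rw [← lintegral_iSup (fun k => hf.min measurable_const)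
    (fun i j hij x => min_le_min_left _ (by exact_mod_cast hij))]
  refine lintegral_congr fun x => ?_
  have := inf_iSup_eq (f x) (fun k : ℕ => (k : ℝ≥0∞))
  rw [ENNReal.iSup_natCast, inf_top_eq] at this
  exact this

lemma line {a b : ℝ} (ha : 0 < a) (hb : 0 < b) (hab : a + b = 1)
    {f g h : ℝ → ℝ≥0∞} (hf : Measurable f) (hg : Measurable g) (hh : Measurable h)
    (H : Dominates a b f g h) :
    (∫⁻ x, f x) ^ a * (∫⁻ x, g x) ^ b ≤ ∫⁻ x, h x := by
  have rpow_iSup : ∀ {c : ℝ} (_ : 0 < c) (u : ℕ → ℝ≥0∞), (⨆ k, u k) ^ c = ⨆ k, u k ^ c :=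
    fun hc u => (ENNReal.orderIsoRpow _ hc).map_iSup u
  rw [lintegral_eq_iSup_truncate hf, lintegral_eq_iSup_truncate hg, rpow_iSup ha, rpow_iSup hb,
    ENNReal.iSup_mul]
  simp only [ENNReal.mul_iSup]
  refine iSup_le fun i => iSup_le fun j => ?_
  have bdd : ∀ (u : ℝ → ℝ≥0∞) (k : ℕ), ⨆ x, min (u x) k ≠ ∞ := fun u k =>
    ((iSup_le fun x => min_le_right (u x) (k : ℝ≥0∞)).trans_lt (ENNReal.natCast_lt_top k)).ne
  refine line_of_bounded ha hb hab (hf.min measurable_const) (hg.min measurable_const) hh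
    (bdd f i) (bdd g j) fun x y => le_trans ?_ (H x y)
  gcongr <;> exact min_le_left _ _

/-! ### Arbitrary dimension -/

lemma piFinSuccAbove_symm_eq_cons {n : ℕ} (z : ℝ × (Fin n → ℝ)) :
    (MeasurableEquiv.piFinSuccAbove (fun _ : Fin (n + 1) => ℝ) 0).symm z = Fin.cons z.1 z.2 := by
  simp [MeasurableEquiv.piFinSuccAbove, Fin.consEquiv]

lemma measurable_cons {n : ℕ} :
    Measurable fun z : ℝ × (Fin n → ℝ) => (Fin.cons z.1 z.2 : Fin (n + 1) → ℝ) := by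
  simpa only [← piFinSuccAbove_symm_eq_cons] using MeasurableEquiv.measurable _

lemma lintegral_pi_succ {n : ℕ} {f : (Fin (n + 1) → ℝ) → ℝ≥0∞} (hf : Measurable f) :
    ∫⁻ p, f p = ∫⁻ x : ℝ, ∫⁻ q : Fin n → ℝ, f (Fin.cons x q) := by
  have hmp := (volume_preserving_piFinSuccAbove (fun _ : Fin (n + 1) => ℝ) 0).symm
  rw [← hmp.lintegral_comp hf]
  simp only [piFinSuccAbove_symm_eq_cons]
  exact lintegral_prod _ (hf.comp measurable_cons).aemeasurable

/-- The Prékopa–Leindler inequality. -/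
theorem prekopaLeindler {a b : ℝ} (ha : 0 < a) (hb : 0 < b) (hab : a + b = 1) (n : ℕ)
    {f g h : (Fin n → ℝ) → ℝ≥0∞} (hf : Measurable f) (hg : Measurable g) (hh : Measurable h)
    (H : Dominates a b f g h) :
    (∫⁻ x, f x) ^ a * (∫⁻ x, g x) ^ b ≤ ∫⁻ x, h x := by
  induction n with
  | zero =>
    simp only [lintegral_unique, volume_pi, Measure.pi_univ, Finset.univ_eq_empty,
      Finset.prod_empty, mul_one]
    exact (H _ _).trans (le_of_eq (congrArg h (Subsingleton.elim _ _)))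
  | succ n ih =>
    rw [lintegral_pi_succ hf, lintegral_pi_succ hg, lintegral_pi_succ hh]
    refine line ha hb hab (hf.comp measurable_cons).lintegral_prod_right'
      (hg.comp measurable_cons).lintegral_prod_right'
      (hh.comp measurable_cons).lintegral_prod_right' fun x y => ?_
    have slice : ∀ {u : (Fin (n + 1) → ℝ) → ℝ≥0∞} (_ : Measurable u) (z : ℝ),
        Measurable fun q : Fin n → ℝ => u (Fin.cons z q) := fun hu z =>
      hu.comp (measurable_cons.comp measurable_prodMk_left)
    refine ih (slice hf x) (slice hg y) (slice hh _) fun p q => ?_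
    refine (H _ _).trans (le_of_eq (congrArg h ?_))
    ext i
    refine Fin.cases ?_ (fun j => ?_) i <;> simp

end PrekopaLeindler

/-- Prékopa's theorem: if `v : ℝⁿ × ℝ → ℝ` is (jointly) convex, then
`t ↦ -log ∫ e^{-v(p,t)} dp` is convex, i.e. the marginal integrals satisfy the
multiplicative inequality below. -/
theorem prekopa_theorem
    (n : ℕ) (v : ((Fin n → ℝ) × ℝ) → ℝ)
    (hv : ConvexOn ℝ Set.univ v) :
    ∀ t₀ t₁ : ℝ, ∀ s ∈ Set.Icc (0 : ℝ) 1,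
      (∫⁻ p, ENNReal.ofReal (Real.exp (-(v (p, t₀))))) ^ (1 - s) *
        (∫⁻ p, ENNReal.ofReal (Real.exp (-(v (p, t₁))))) ^ s ≤
      ∫⁻ p, ENNReal.ofReal (Real.exp (-(v (p, (1 - s) * t₀ + s * t₁)))) := by
  intro t₀ t₁ s hs
  rcases hs.1.eq_or_lt with rfl | hs0
  · simp
  rcases hs.2.eq_or_lt with rfl | hs1
  · simp
  have hcont : Continuous v := continuousOn_univ.1 (hv.continuousOn isOpen_univ)
  have hmeas : ∀ t : ℝ, Measurable fun p => ENNReal.ofReal (Real.exp (-(v (p, t)))) := fun t =>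
    (by fun_prop : Continuous fun p => Real.exp (-(v (p, t)))).measurable.ennreal_ofReal
  refine PrekopaLeindler.prekopaLeindler (sub_pos.2 hs1) hs0 (by ring) n (hmeas _) (hmeas _)
    (hmeas _) fun x y => ?_
  rw [ENNReal.ofReal_rpow_of_pos (Real.exp_pos _), ENNReal.ofReal_rpow_of_pos (Real.exp_pos _),
    ← ENNReal.ofReal_mul (by positivity), ← Real.exp_mul, ← Real.exp_mul, ← Real.exp_add]
  refine ENNReal.ofReal_le_ofReal (Real.exp_le_exp.2 ?_)
  have := hv.2 (Set.mem_univ (x, t₀)) (Set.mem_univ (y, t₁)) (sub_pos.2 hs1).le hs0.le (by ring)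
  simp only [Prod.smul_mk, Prod.mk_add_mk, smul_eq_mul] at this
  linarith
end
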